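/- For every choice of probabilities p_v ∈ (0,1], letting π_0' be the twin policy of π_0, Bland(𝔇_n, π_0', 𝒩_{𝔇_n}) performs at least 2^n − 1 improving switches before terminating. -/

import Mathlib

/-! ## The Markov decision process `𝔅_n` -/

/-- Vertices of the MDP `𝔅_n`: a transportation vertex `t`, a sink `s`, a dummy vertex `d`,
and vertices `a i`, `b i` for `i ∈ {1,…,n}`. -/
inductive BV : Type where
  | t : BV
  | s : BV
  | d : BV
  | a : ℕ → BV
  | b : ℕ → BV
deriving DecidableEq

/-- The vertex `a i` for `i ∈ {1,…,n+1}`, with the convention `a (n+1) = s`. -/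
def aN (n i : ℕ) : BV := if i = n + 1 then BV.s else BV.a i

/-- The vertex `b i` for `i ∈ {1,…,n+1}`, with the convention `b (n+1) = d`. -/
def bN (n i : ℕ) : BV := if i = n + 1 then BV.d else BV.b i

/-- The vertex set of `𝔅_n`. -/
def IsBVertex (n : ℕ) : BV → Prop
  | BV.t => True
  | BV.s => True
  | BV.d => True
  | BV.a i => 1 ≤ i ∧ i ≤ n
  | BV.b i => 1 ≤ i ∧ i ≤ n

/-- The edge relation of `𝔅_n`: travel, enter, skip, board, stay, leave edges,
the edge `(d,s)` and the self-loop `(s,s)`. -/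
def BEdge (n : ℕ) (u v : BV) : Prop :=
  (∃ i, 1 ≤ i ∧ i ≤ n ∧ u = BV.t ∧ v = BV.a i) ∨
  (∃ i, 1 ≤ i ∧ i ≤ n ∧ u = BV.a i ∧ v = BV.b i) ∨
  (∃ i, 1 ≤ i ∧ i ≤ n ∧ u = BV.a i ∧ v = aN n (i + 1)) ∨
  (∃ i, 1 ≤ i ∧ i ≤ n ∧ u = BV.a i ∧ v = BV.t) ∨
  (∃ i, 1 ≤ i ∧ i ≤ n ∧ u = BV.b i ∧ v = bN n (i + 1)) ∨
  (∃ i, 1 ≤ i ∧ i ≤ n ∧ u = BV.b i ∧ v = aN n (i + 1)) ∨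
  (u = BV.d ∧ v = BV.s) ∨ (u = BV.s ∧ v = BV.s)

/-- The reward function of `𝔅_n`: `r(enter i) = 2^i`, `r(stay i) = 3/4`,
`r(board i) = -2^i + 5/4`, and reward `0` on all other edges. -/
def rB (n : ℕ) (u v : BV) : ℚ :=
  match u, v with
  | BV.a i, BV.b j => if i = j then 2 ^ i else 0
  | BV.a i, BV.t => -(2 ^ i) + 5 / 4
  | BV.b i, BV.b j => if j = i + 1 then 3 / 4 else 0
  | BV.b i, BV.d => if i = n then 3 / 4 else 0
  | _, _ => 0

/-- A policy for `𝔅_n` chooses an outgoing edge at every vertex. -/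
def IsBPolicy (n : ℕ) (π : BV → BV) : Prop := ∀ u, IsBVertex n u → BEdge n u (π u)

/-- A policy is weak unichain if it reaches the sink `s` from every vertex. -/
def BWeakUnichain (n : ℕ) (π : BV → BV) : Prop :=
  ∀ u, IsBVertex n u → ∃ k, π^[k] u = BV.s

open Classical in
/-- The value of a vertex `v` w.r.t. a (weak unichain) policy `π`:
the sum of the rewards along the path that `π` takes from `v` to the sink `s`. -/
noncomputable def BVal (n : ℕ) (π : BV → BV) (v : BV) : ℚ :=
  if h : ∃ k, π^[k] v = BV.s then
    ∑ i ∈ Finset.range (Nat.find h), rB n (π^[i] v) (π^[i + 1] v)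
  else 0

/-- The reduced costs of the edge `(u,v)` w.r.t. the policy `π`. -/
noncomputable def zB (n : ℕ) (π : BV → BV) (u v : BV) : ℚ :=
  rB n u v + BVal n π v - BVal n π u

/-- The edge `(u,v)` is an improving switch for `π` if its reduced costs are positive. -/
def BImproving (n : ℕ) (π : BV → BV) (u v : BV) : Prop :=
  BEdge n u v ∧ 0 < zB n π u v

/-- The Bland numbering `𝒩_{𝔅_n}` of the edges of `𝔅_n`. -/
def NB (n : ℕ) (u v : BV) : ℕ :=
  match u, v with
  | BV.t, BV.a i => i
  | BV.a i, BV.b _ => n + 1 + 5 * (i - 1)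
  | BV.a i, BV.a _ => n + 2 + 5 * (i - 1)
  | BV.a i, BV.s => n + 2 + 5 * (i - 1)
  | BV.a i, BV.t => n + 3 + 5 * (i - 1)
  | BV.b i, BV.b _ => n + 4 + 5 * (i - 1)
  | BV.b i, BV.d => n + 4 + 5 * (i - 1)
  | BV.b i, BV.a _ => n + 5 + 5 * (i - 1)
  | BV.b i, BV.s => n + 5 + 5 * (i - 1)
  | BV.d, BV.s => 6 * n + 1
  | BV.s, BV.s => 6 * n + 2
  | _, _ => 0

/-- One step of Bland's policy iteration with edge numbering `N`:
apply the improving switch with the smallest number. -/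
def IsBlandStep (n : ℕ) (N : BV → BV → ℕ) (π π' : BV → BV) : Prop :=
  ∃ u v, BImproving n π u v ∧ (∀ u' v', BImproving n π u' v' → N u v ≤ N u' v') ∧
    π' = Function.update π u v

/-- `BlandReaches n N π ψ` says that Bland's policy iteration started at `π` visits `ψ`. -/
def BlandReaches (n : ℕ) (N : BV → BV → ℕ) : (BV → BV) → (BV → BV) → Prop :=
  Relation.ReflTransGen (IsBlandStep n N)

/-- The canonical policy `π_0` for `0`: `travel 1`, `skip i` and `leave i` are active. -/
def pi0 (n : ℕ) : BV → BV := fun u =>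
  match u with
  | BV.t => BV.a 1
  | BV.a i => aN n (i + 1)
  | BV.b i => aN n (i + 1)
  | BV.d => BV.s
  | BV.s => BV.s

/-- The optimal policy `π_*`: `travel 1`, `enter i` for all `i`, `leave j` for `j < n`,
and `stay n` are active. -/
def piStar (n : ℕ) : BV → BV := fun u =>
  match u with
  | BV.t => BV.a 1
  | BV.a i => BV.b i
  | BV.b i => if i = n then BV.d else BV.a (i + 1)
  | BV.d => BV.s
  | BV.s => BV.s

/-! ## Bits and canonical policies -/

/-- The least significant set bit `ℓ_1(x)` (1-based). -/
noncomputable def lsb (x : ℕ) : ℕ := sInf {i | 1 ≤ i ∧ Nat.testBit x (i - 1)}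

/-- The most significant set bit `m(x)` (1-based). -/
noncomputable def msb1 (x : ℕ) : ℕ := sSup {i | 1 ≤ i ∧ Nat.testBit x (i - 1)}

/-- The least unset bit `ℓ_0(x)` (1-based). -/
noncomputable def lzero (x : ℕ) : ℕ := sInf {i | 1 ≤ i ∧ ¬ Nat.testBit x (i - 1)}

/-- `L_i(x) = max { j ≤ i-2 | x_j = 1 or j = 1 }` (1-based bits). -/
noncomputable def Lfun (i x : ℕ) : ℕ :=
  sSup {j | 1 ≤ j ∧ j ≤ i - 2 ∧ (Nat.testBit x (j - 1) ∨ j = 1)}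

/-- `IsCanonical n x π` says that `π` is the canonical policy `π_x` for `x`. -/
noncomputable def IsCanonical (n x : ℕ) (π : BV → BV) : Prop :=
  IsBPolicy n π ∧
  if x = 0 then
    π BV.t = BV.a 1 ∧
      ∀ i, 1 ≤ i → i ≤ n → π (BV.a i) = aN n (i + 1) ∧ π (BV.b i) = aN n (i + 1)
  else
    π BV.t = BV.a (lsb x) ∧
    π (BV.b (msb1 x)) = aN n (msb1 x + 1) ∧
    (∀ i, msb1 x < i → i ≤ n → π (BV.a i) = aN n (i + 1) ∧ π (BV.b i) = aN n (i + 1)) ∧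
    ∀ i, 1 ≤ i → i ≤ n → Nat.testBit x (i - 1) →
      π (BV.a i) = BV.b i ∧
      (i = 2 → π (BV.b 1) = BV.a 2 ∧ (¬ Nat.testBit x 0 → π (BV.a 1) = BV.a 2)) ∧
      (3 ≤ i → Nat.testBit x (i - 2) → π (BV.b (i - 1)) = BV.a i) ∧
      (3 ≤ i → ¬ Nat.testBit x (i - 2) →
        π (BV.b (i - 1)) = BV.b i ∧ π (BV.a (i - 1)) = BV.a i ∧
        π (BV.b (i - 2)) = BV.a (i - 1) ∧
        (Lfun i x < i - 2 →
          ∀ j, Lfun i x + 1 ≤ j → j ≤ i - 2 →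
            π (BV.a j) = BV.t ∧ π (BV.b (j - 1)) = BV.b j) ∧
        (Lfun i x = 1 → ¬ Nat.testBit x 0 → π (BV.a 1) = BV.t))

/-- Activating a list of edges in a policy, from left to right. -/
def activateList (π : BV → BV) (L : List (BV × BV)) : BV → BV :=
  L.foldl (fun σ e => Function.update σ e.1 e.2) π

/-- The canonical phases w.r.t. an odd number `x` (with `ℓ := ℓ_0(x)`), as a list of edges
to be activated in order. -/
noncomputable def phaseList (n x : ℕ) : List (BV × BV) :=
  let ℓ := lzero x
  (if Nat.testBit x ℓ then [(BV.b ℓ, aN n (ℓ + 1))] else []) ++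
  (if Nat.testBit x ℓ ∨ msb1 x < ℓ then [(BV.b (ℓ - 1), BV.b ℓ)] else []) ++
  [(BV.a ℓ, BV.b ℓ), (BV.t, BV.a ℓ)] ++
  ((List.range (ℓ - 2)).map fun j => (BV.a (j + 1), BV.t)) ++
  [(BV.a (ℓ - 1), BV.a ℓ)] ++
  (((List.range (ℓ - 3)).reverse).map fun j => (BV.b (j + 1), BV.b (j + 2))) ++
  (if ℓ = 2 then [(BV.b 1, BV.a 2)] else [])

/-! ## The Markov decision process `𝔇_n` -/

/-- Vertices of `𝔇_n`: the original vertices (`base`), and for every edge `(v,w)` of `𝔅_n`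
other than the self-loop, the gadget vertices `x v w`, `y v w`, `z v w`. -/
inductive DV : Type where
  | base : BV → DV
  | x : BV → BV → DV
  | y : BV → BV → DV
  | z : BV → BV → DV
deriving DecidableEq

/-- The edges of `𝔅_n` that get replaced by gadgets (all edges except the self-loop `(s,s)`). -/
def DEdgePair (n : ℕ) (v w : BV) : Prop := BEdge n v w ∧ v ≠ BV.s

/-- The vertex set of `𝔇_n`. -/
def IsDVertex (n : ℕ) : DV → Prop
  | DV.base v => IsBVertex n v
  | DV.x v w => DEdgePair n v w
  | DV.y v w => DEdgePair n v w
  | DV.z v w => DEdgePair n v w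

/-- The agent vertices of `𝔇_n` (all vertices except the randomization vertices `y v w`). -/
def IsDAgent (n : ℕ) : DV → Prop
  | DV.base v => IsBVertex n v
  | DV.x v w => DEdgePair n v w
  | DV.y _ _ => False
  | DV.z v w => DEdgePair n v w

/-- The agent edges of `𝔇_n`. -/
def DEdge (n : ℕ) (u u' : DV) : Prop :=
  (∃ v w, DEdgePair n v w ∧
    ((u = DV.base v ∧ u' = DV.x v w) ∨ (u = DV.x v w ∧ u' = DV.base v) ∨
     (u = DV.x v w ∧ u' = DV.y v w) ∨ (u = DV.z v w ∧ u' = DV.base w))) ∨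
  (u = DV.base BV.s ∧ u' = DV.base BV.s)

/-- The reward function of `𝔇_n`: the edge `(z v w, w)` carries the reward of the original
edge `(v,w)`; all other agent edges have reward `0`. -/
def rD (n : ℕ) (u u' : DV) : ℚ :=
  match u, u' with
  | DV.z v w, DV.base w' => if w' = w then rB n v w else 0
  | _, _ => 0

/-- A policy for `𝔇_n` chooses an outgoing agent edge at every agent vertex. -/
def IsDPolicy (n : ℕ) (π : DV → DV) : Prop := ∀ u, IsDAgent n u → DEdge n u (π u)

/-- `IsDVal n p π V` says that `V` satisfies the Bellman equations characterizing the value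
function of the policy `π` for `𝔇_n` with probabilities `p`, with `V s = 0`. -/
def IsDVal (n : ℕ) (p : BV → ℚ) (π : DV → DV) (V : DV → ℚ) : Prop :=
  V (DV.base BV.s) = 0 ∧
  (∀ u, IsDAgent n u → V u = rD n u (π u) + V (π u)) ∧
  (∀ v w, DEdgePair n v w →
    V (DV.y v w) = p v * V (DV.z v w) + (1 - p v) * V (DV.base v))

open Classical in
/-- The value function of a (weak unichain) policy `π` for `𝔇_n`: the unique solution of the
Bellman equations (normalized to `0` outside the vertex set). -/
noncomputable def DVal (n : ℕ) (p : BV → ℚ) (π : DV → DV) : DV → ℚ :=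
  if h : ∃! V : DV → ℚ, IsDVal n p π V ∧ ∀ u, ¬ IsDVertex n u → V u = 0 then
    h.exists.choose
  else fun _ => 0

/-- The reduced costs of an agent edge `(u,u')` of `𝔇_n` w.r.t. the policy `π`. -/
noncomputable def zD (n : ℕ) (p : BV → ℚ) (π : DV → DV) (u u' : DV) : ℚ :=
  rD n u u' + DVal n p π u' - DVal n p π u

/-- An agent edge of `𝔇_n` is an improving switch if its reduced costs are positive. -/
def DImproving (n : ℕ) (p : BV → ℚ) (π : DV → DV) (u u' : DV) : Prop :=
  DEdge n u u' ∧ 0 < zD n p π u u'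

/-- One (agent or positive-probability randomization) step of the process `𝔇_n` under `π`. -/
def DStep (n : ℕ) (p : BV → ℚ) (π : DV → DV) (u u' : DV) : Prop :=
  (IsDAgent n u ∧ u' = π u) ∨
  (∃ v w, DEdgePair n v w ∧ u = DV.y v w ∧
    ((u' = DV.z v w ∧ 0 < p v) ∨ (u' = DV.base v ∧ 0 < 1 - p v)))

/-- A policy for `𝔇_n` is weak unichain if it reaches `s` with probability one from every
vertex, i.e. `s` is reachable via active/positive-probability steps from every vertex. -/
def DWeakUnichain (n : ℕ) (p : BV → ℚ) (π : DV → DV) : Prop :=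
  ∀ u, IsDVertex n u → Relation.ReflTransGen (DStep n p π) u (DV.base BV.s)

/-- The twin policy of a policy `π` for `𝔅_n`: every vertex `v ≠ s` is `π v`-oriented. -/
def twin (π : BV → BV) : DV → DV := fun u =>
  match u with
  | DV.base v => if v = BV.s then DV.base BV.s else DV.x v (π v)
  | DV.x v w => if w = π v then DV.y v w else DV.base v
  | DV.y v w => DV.y v w
  | DV.z _ w => DV.base w

/-- The vertex numbering `𝒩_V` of `𝔅_n`: the order `(t, a 1, b 1, a 2, b 2, …, a n, b n, d, s)`. -/
def NV (n : ℕ) : BV → ℕ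
  | BV.t => 1
  | BV.a i => 2 * i
  | BV.b i => 2 * i + 1
  | BV.d => 2 * n + 2
  | BV.s => 2 * n + 3

/-- The specific probabilities `p_v = 2^{-𝒩_V(v)·(n+5)}`. -/
noncomputable def pSpec (n : ℕ) (v : BV) : ℚ := (2 : ℚ) ^ (-((NV n v * (n + 5) : ℕ) : ℤ))

/-- The set `B(v)` of agent edges of `𝔇_n` belonging to the vertex `v`. -/
def Belongs (n : ℕ) (v : BV) (e : DV × DV) : Prop :=
  ∃ w, DEdgePair n v w ∧
    (e = (DV.x v w, DV.y v w) ∨ e = (DV.base v, DV.x v w) ∨ e = (DV.x v w, DV.base v))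

/-- Applying the improving switch `e` to the policy `π` yields `π'`. -/
def DApply (n : ℕ) (p : BV → ℚ) (π : DV → DV) (e : DV × DV) (π' : DV → DV) : Prop :=
  DImproving n p π e.1 e.2 ∧ π' = Function.update π e.1 e.2

/-- One step of Bland's policy iteration on `𝔇_n` with edge numbering `N`. -/
def IsBlandStepD (n : ℕ) (p : BV → ℚ) (N : DV → DV → ℕ) (π π' : DV → DV) : Prop :=
  ∃ u u', DImproving n p π u u' ∧ (∀ a b, DImproving n p π a b → N u u' ≤ N a b) ∧
    π' = Function.update π u u'

/-- One step of Dantzig's policy iteration on `𝔇_n`: apply an improving switch of maximal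
reduced costs. -/
def DantzigStep (n : ℕ) (p : BV → ℚ) (π π' : DV → DV) : Prop :=
  ∃ u u', DImproving n p π u u' ∧
    (∀ a b, DImproving n p π a b → zD n p π a b ≤ zD n p π u u') ∧
    π' = Function.update π u u'

/-- The finite set of vertices of `𝔅_n`, as a `Finset`. -/
noncomputable def BVSet (n : ℕ) : Finset BV :=
  {BV.t, BV.d, BV.s} ∪ (Finset.Icc 1 n).image BV.a ∪ (Finset.Icc 1 n).image BV.b

/-- The finite set of agent vertices of `𝔇_n`, as a `Finset`. -/
noncomputable def DAgentSet (n : ℕ) : Finset DV := by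
  classical
  exact ((BVSet n).image DV.base) ∪
    (((BVSet n ×ˢ BVSet n).filter fun e => DEdgePair n e.1 e.2).image fun e => DV.x e.1 e.2) ∪
    (((BVSet n ×ˢ BVSet n).filter fun e => DEdgePair n e.1 e.2).image fun e => DV.z e.1 e.2)

/-- The objective of the Largest Increase rule: the sum of the values of all agent vertices. -/
noncomputable def LIobj (n : ℕ) (p : BV → ℚ) (π : DV → DV) : ℚ :=
  ∑ u ∈ DAgentSet n, DVal n p π u

/-- One step of the Largest Increase policy iteration on `𝔇_n`: apply an improving switch
maximizing the sum of all agent vertex values of the resulting policy. -/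
def LIStep (n : ℕ) (p : BV → ℚ) (π π' : DV → DV) : Prop :=
  ∃ u u', DImproving n p π u u' ∧
    (∀ a b, DImproving n p π a b →
      LIobj n p (Function.update π a b) ≤ LIobj n p (Function.update π u u')) ∧
    π' = Function.update π u u'

/-- `N` is a Bland numbering `𝒩_{𝔇_n}` for `𝔇_n`: it is injective on agent edges, the edges
`(x v w, v)` all come first, within each gadget `(x v w, y v w)` precedes `(v, x v w)`,
the gadget blocks are ordered according to `𝒩_{𝔅_n}`, and the self-loop comes last. -/
def IsDBlandNumbering (n : ℕ) (N : DV → DV → ℕ) : Prop :=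
  (∀ u₁ u₂ u₁' u₂', DEdge n u₁ u₂ → DEdge n u₁' u₂' → N u₁ u₂ = N u₁' u₂' →
    u₁ = u₁' ∧ u₂ = u₂') ∧
  (∀ v w v' w', DEdgePair n v w → DEdgePair n v' w' →
    N (DV.x v w) (DV.base v) < N (DV.x v' w') (DV.y v' w')) ∧
  (∀ v w, DEdgePair n v w → N (DV.x v w) (DV.y v w) < N (DV.base v) (DV.x v w)) ∧
  (∀ v w v' w', DEdgePair n v w → DEdgePair n v' w' → NB n v w < NB n v' w' →
    N (DV.base v) (DV.x v w) < N (DV.x v' w') (DV.y v' w')) ∧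
  (∀ v w, DEdgePair n v w → N (DV.base v) (DV.x v w) < N (DV.base BV.s) (DV.base BV.s))

/-! ## Bellman equations and the comparison principle on `𝔅_n` -/

/-- `W` solves the Bellman equations of the policy `π`. -/
def BellB (n : ℕ) (π : BV → BV) (W : BV → ℚ) : Prop :=
  IsBPolicy n π ∧ W BV.s = 0 ∧
    ∀ v, IsBVertex n v → v ≠ BV.s → W v = rB n v (π v) + W (π v)

/-- Reduced costs with respect to a value function. -/
def zz (n : ℕ) (W : BV → ℚ) (u v : BV) : ℚ := rB n u v + W v - W u

theorem edge_vertex {n : ℕ} {u v : BV} (h : BEdge n u v) : IsBVertex n u ∧ IsBVertex n v := by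
  rcases h with ⟨i, h1, h2, rfl, rfl⟩ | ⟨i, h1, h2, rfl, rfl⟩ | ⟨i, h1, h2, rfl, rfl⟩ |
    ⟨i, h1, h2, rfl, rfl⟩ | ⟨i, h1, h2, rfl, rfl⟩ | ⟨i, h1, h2, rfl, rfl⟩ | ⟨rfl, rfl⟩ | ⟨rfl, rfl⟩ <;>
  (try unfold aN) <;> (try unfold bN) <;> (try split_ifs) <;> simp [IsBVertex] <;> omega

theorem edge_t {n : ℕ} {v : BV} (h : BEdge n BV.t v) : ∃ i, 1 ≤ i ∧ i ≤ n ∧ v = BV.a i := by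
  simpa [BEdge] using h

theorem edge_d {n : ℕ} {v : BV} (h : BEdge n BV.d v) : v = BV.s := by
  simpa [BEdge] using h

theorem edge_a {n i : ℕ} {v : BV} (h : BEdge n (BV.a i) v) :
    v = BV.b i ∨ v = aN n (i + 1) ∨ v = BV.t := by
  simp [BEdge] at h
  grind

theorem edge_b {n i : ℕ} {v : BV} (h : BEdge n (BV.b i) v) :
    v = bN n (i + 1) ∨ v = aN n (i + 1) := by
  simp [BEdge] at h
  grind

theorem r_enter (n i : ℕ) : rB n (BV.a i) (BV.b i) = 2 ^ i := by simp [rB]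
theorem r_skip (n i j : ℕ) : rB n (BV.a i) (aN n j) = 0 := by
  unfold aN; split_ifs <;> simp [rB]
theorem r_board (n i : ℕ) : rB n (BV.a i) BV.t = -(2 ^ i) + 5 / 4 := by simp [rB]
theorem r_stay (n i : ℕ) : rB n (BV.b i) (bN n (i + 1)) = 3 / 4 := by
  unfold bN; split_ifs with h
  · have : i = n := by omega
    simp [rB, this]
  · simp [rB]
theorem r_leave (n i j : ℕ) : rB n (BV.b i) (aN n j) = 0 := by
  unfold aN; split_ifs <;> simp [rB]
theorem r_travel (n i : ℕ) : rB n BV.t (BV.a i) = 0 := by simp [rB]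

theorem aN_le {n i : ℕ} (h : i ≤ n) : aN n i = BV.a i := by
  unfold aN; rw [if_neg (by omega)]
theorem bN_le {n i : ℕ} (h : i ≤ n) : bN n i = BV.b i := by
  unfold bN; rw [if_neg (by omega)]
theorem aN_top (n : ℕ) : aN n (n + 1) = BV.s := by simp [aN]
theorem bN_top (n : ℕ) : bN n (n + 1) = BV.d := by simp [bN]

/-- Comparison principle. -/
theorem comparison {n : ℕ} {π : BV → BV} {W : BV → ℚ} (hW : BellB n π W) (D : BV → ℚ)
    (hs : D BV.s ≤ 0) (hD : ∀ v, IsBVertex n v → v ≠ BV.s → D v ≤ D (π v)) :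
    ∀ v, IsBVertex n v → D v ≤ 0 := by
  obtain ⟨hpol, hW0, hB⟩ := hW
  have hd : D BV.d ≤ 0 := by
    have h1 := edge_d (hpol BV.d trivial)
    have h2 := hD BV.d trivial (by simp)
    rw [h1] at h2; linarith
  have key : ∀ k i, i + k = n + 1 → 1 ≤ i →
      (D (aN n i) ≤ 0 ∨ (D (aN n i) ≤ D BV.t ∧ W (aN n i) ≤ W BV.t + 5 / 4 - 2 ^ i)) ∧
      (D (bN n i) ≤ 0 ∨ (D (bN n i) ≤ D BV.t ∧ W (bN n i) ≤ W BV.t + 5 / 4 - 2 ^ (i + 1))) := by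
    intro k
    induction k with
    | zero =>
      intro i hi _
      have : i = n + 1 := by omega
      subst this
      rw [aN_top, bN_top]
      exact ⟨Or.inl hs, Or.inl hd⟩
    | succ k ih =>
      intro i hi h1
      have hin : i ≤ n := by omega
      obtain ⟨iha, ihb⟩ := ih (i + 1) (by omega) (by omega)
      rw [aN_le hin, bN_le hin]
      have hpos : (0 : ℚ) < 2 ^ i := by positivity
      have hge : (2 : ℚ) ≤ 2 ^ i := by
        calc (2 : ℚ) = 2 ^ 1 := by norm_num
          _ ≤ 2 ^ i := pow_le_pow_right₀ (by norm_num) h1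
      have e1 : (2 : ℚ) ^ (i + 1) = 2 * 2 ^ i := by ring
      have e2 : (2 : ℚ) ^ (i + 1 + 1) = 4 * 2 ^ i := by ring
      rw [e1] at iha ⊢
      rw [e2] at ihb
      have hb : D (BV.b i) ≤ 0 ∨ (D (BV.b i) ≤ D BV.t ∧ W (BV.b i) ≤ W BV.t + 5 / 4 - 2 * 2 ^ i) := by
        have hv : IsBVertex n (BV.b i) := ⟨h1, hin⟩
        have d1 := hD _ hv (by simp)
        have w1 := hB _ hv (by simp)
        rcases edge_b (hpol _ hv) with h | h
        · rw [h] at d1 w1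
          rw [r_stay] at w1
          rcases ihb with g | ⟨g, g'⟩
          · left; linarith
          · right; constructor <;> linarith
        · rw [h] at d1 w1
          rw [r_leave] at w1
          rcases iha with g | ⟨g, g'⟩
          · left; linarith
          · right; constructor <;> linarith
      refine ⟨?_, hb⟩
      have hv : IsBVertex n (BV.a i) := ⟨h1, hin⟩
      have d1 := hD _ hv (by simp)
      have w1 := hB _ hv (by simp)
      rcases edge_a (hpol _ hv) with h | h | h
      · rw [h] at d1 w1
        rw [r_enter] at w1
        rcases hb with g | ⟨g, g'⟩
        · left; linarith
        · right; constructor <;> linarith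
      · rw [h] at d1 w1
        rw [r_skip] at w1
        rcases iha with g | ⟨g, g'⟩
        · left; linarith
        · right; constructor <;> linarith
      · rw [h] at d1 w1
        rw [r_board] at w1
        right; constructor <;> linarith
  have ht : D BV.t ≤ 0 := by
    obtain ⟨i, h1, h2, h3⟩ := edge_t (hpol BV.t trivial)
    have d1 := hD BV.t trivial (by simp)
    have w1 := hB BV.t trivial (by simp)
    rw [h3] at d1 w1
    rw [r_travel] at w1
    have := (key (n + 1 - i) i (by omega) h1).1
    rw [aN_le h2] at this
    have hge : (2 : ℚ) ≤ 2 ^ i := by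
      calc (2 : ℚ) = 2 ^ 1 := by norm_num
        _ ≤ 2 ^ i := pow_le_pow_right₀ (by norm_num) h1
    rcases this with g | ⟨g, g'⟩ <;> linarith
  intro v hv
  cases v with
  | t => exact ht
  | s => exact hs
  | d => exact hd
  | a i =>
    have := (key (n + 1 - i) i (by have := hv.2; omega) hv.1).1
    rw [aN_le hv.2] at this
    rcases this with g | ⟨g, g'⟩ <;> linarith
  | b i =>
    have := (key (n + 1 - i) i (by have := hv.2; omega) hv.1).2
    rw [bN_le hv.2] at this
    rcases this with g | ⟨g, g'⟩ <;> linarith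

theorem bell_unique {n : ℕ} {π : BV → BV} {W W' : BV → ℚ} (hW : BellB n π W)
    (hW' : BellB n π W') : ∀ v, IsBVertex n v → W v = W' v := by
  intro v hv
  have h1 := comparison hW (fun v => W v - W' v) (by simp [hW.2.1, hW'.2.1])
    (by intro v hv hs; have := hW.2.2 v hv hs; have := hW'.2.2 v hv hs; linarith) v hv
  have h2 := comparison hW (fun v => W' v - W v) (by simp [hW.2.1, hW'.2.1])
    (by intro v hv hs; have := hW.2.2 v hv hs; have := hW'.2.2 v hv hs; linarith) v hv
  linarith

/-- After an improving switch at `u`, the formerly active edge has negative reduced costs. -/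
theorem old_edge_neg {n : ℕ} {π : BV → BV} {W W' : BV → ℚ} {u w : BV} (hW : BellB n π W)
    (hW' : BellB n (Function.update π u w) W') (hu : IsBVertex n u) (hus : u ≠ BV.s)
    (hz : 0 < zz n W u w) : zz n W' u (π u) < 0 := by
  by_contra hcon
  push Not at hcon
  unfold zz at hz hcon
  have hWu := hW'.2.2 u hu hus
  rw [Function.update_self] at hWu
  have h1 := comparison hW (fun v => W' v - W v) (by simp [hW.2.1, hW'.2.1]) (by
    intro v hv hs
    have e1 := hW.2.2 v hv hs
    by_cases hvu : v = u
    · subst hvu; linarith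
    · have e2 := hW'.2.2 v hv hs
      rw [Function.update_of_ne hvu] at e2
      linarith)
  have h2 := comparison hW' (fun v => W v - W' v) (by simp [hW.2.1, hW'.2.1]) (by
    intro v hv hs
    have e1 := hW.2.2 v hv hs
    by_cases hvu : v = u
    · subst hvu; simp only [Function.update_self]; linarith
    · have e2 := hW'.2.2 v hv hs
      rw [Function.update_of_ne hvu] at e2
      simp only [Function.update_of_ne hvu]; linarith)
  have hw : IsBVertex n w := by
    have := hW'.1 u hu
    rw [Function.update_self] at this
    exact (edge_vertex this).2
  have a1 := h1 u hu
  have a2 := h2 u hu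
  have a3 := h1 w hw
  have a4 := h2 w hw
  linarith

/-! ## Values in `𝔇_n` -/

open Classical in
/-- A policy for `𝔇_n` with base choice `σ` and set `M` of gadgets with `(x,y)` active. -/
noncomputable def gen (σ : BV → BV) (M : BV → BV → Prop) : DV → DV := fun u =>
  match u with
  | DV.base v => if v = BV.s then DV.base BV.s else DV.x v (σ v)
  | DV.x v w => if M v w then DV.y v w else DV.base v
  | DV.y v w => DV.y v w
  | DV.z _ w => DV.base w

open Classical in
/-- The value function of `gen σ M`. -/
noncomputable def genV (n : ℕ) (p : BV → ℚ) (M : BV → BV → Prop) (W : BV → ℚ) : DV → ℚ := fun u =>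
  if IsDVertex n u then
    match u with
    | DV.base v => W v
    | DV.x v w => if M v w then W v + p v * zz n W v w else W v
    | DV.y v w => W v + p v * zz n W v w
    | DV.z v w => rB n v w + W w
  else 0

theorem genV_isDVal {n : ℕ} {p : BV → ℚ} {σ : BV → BV} {M : BV → BV → Prop} {W : BV → ℚ}
    (hW : BellB n σ W) (hM : ∀ v, IsBVertex n v → v ≠ BV.s → M v (σ v)) :
    IsDVal n p (gen σ M) (genV n p M W) := by
  refine ⟨?_, ?_, ?_⟩
  · simp [genV, IsDVertex, IsBVertex, hW.2.1]
  · intro u hu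
    cases u with
    | base v =>
      have hv : IsBVertex n v := hu
      by_cases hs : v = BV.s
      · subst hs
        simp [gen, rD]
      · have he : DEdgePair n v (σ v) := ⟨hW.1 v hv, hs⟩
        have := hW.2.2 v hv hs
        simp only [gen, hs, if_false, rD, genV, IsDVertex, he, hv, if_true, hM v hv hs, zz]
        rw [this]; ring
    | x v w =>
      have he : DEdgePair n v w := hu
      have hv := (edge_vertex he.1).1
      by_cases hm : M v w
      · simp [gen, rD, genV, IsDVertex, he, hm]
      · simp [gen, rD, genV, IsDVertex, he, hm, hv]
    | y v w => exact hu.elim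
    | z v w =>
      have he : DEdgePair n v w := hu
      have hw := (edge_vertex he.1).2
      simp [gen, rD, genV, IsDVertex, he, hw]
  · intro v w he
    have hv := (edge_vertex he.1).1
    simp only [genV, IsDVertex, he, hv, if_true, zz]
    ring

theorem genV_unique {n : ℕ} {p : BV → ℚ} {σ : BV → BV} {M : BV → BV → Prop} {W : BV → ℚ}
    (hp : ∀ v, IsBVertex n v → v ≠ BV.s → 0 < p v ∧ p v ≤ 1)
    (hW : BellB n σ W) (hM : ∀ v, IsBVertex n v → v ≠ BV.s → M v (σ v)) (V : DV → ℚ)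
    (hV : IsDVal n p (gen σ M) V) (hV0 : ∀ u, ¬ IsDVertex n u → V u = 0) :
    V = genV n p M W := by
  obtain ⟨h0, h1, h2⟩ := hV
  have hz : ∀ v w, DEdgePair n v w → V (DV.z v w) = rB n v w + V (DV.base w) := by
    intro v w he
    have := h1 (DV.z v w) he
    simpa [gen, rD] using this
  have hB : BellB n σ (fun v => V (DV.base v)) := by
    refine ⟨hW.1, h0, ?_⟩
    intro v hv hs
    have he : DEdgePair n v (σ v) := ⟨hW.1 v hv, hs⟩
    have e1 := h1 (DV.base v) hv
    have e2 := h1 (DV.x v (σ v)) he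
    have e3 := h2 v (σ v) he
    have e4 := hz v (σ v) he
    simp only [gen, hs, if_false, rD, hM v hv hs, if_true] at e1 e2
    have hpv := (hp v hv hs).1
    have : p v * (V (DV.base v)) = p v * (rB n v (σ v) + V (DV.base (σ v))) := by
      rw [e4] at e3
      linarith
    exact mul_left_cancel₀ hpv.ne' this
  have hbase : ∀ v, IsBVertex n v → V (DV.base v) = W v := fun v hv => bell_unique hB hW v hv
  funext u
  by_cases hu : IsDVertex n u
  swap
  · rw [hV0 u hu]; simp [genV, hu]
  have hy : ∀ v w, DEdgePair n v w → V (DV.y v w) = W v + p v * zz n W v w := by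
    intro v w he
    rw [h2 v w he, hz v w he, hbase v (edge_vertex he.1).1, hbase w (edge_vertex he.1).2]
    unfold zz; ring
  cases u with
  | base v =>
    have hv : IsBVertex n v := hu
    simp [genV, IsDVertex, hv, hbase v hv]
  | x v w =>
    have he : DEdgePair n v w := hu
    have e1 := h1 (DV.x v w) he
    by_cases hm : M v w
    · simp only [gen, hm, if_true, rD] at e1
      simp [genV, IsDVertex, he, hm, e1, hy v w he]
    · simp only [gen, hm, if_false, rD] at e1
      simp [genV, IsDVertex, he, hm, e1, hbase v (edge_vertex he.1).1]
  | y v w =>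
    have he : DEdgePair n v w := hu
    simp [genV, IsDVertex, he, hy v w he]
  | z v w =>
    have he : DEdgePair n v w := hu
    simp [genV, IsDVertex, he, hz v w he, hbase w (edge_vertex he.1).2]

theorem DVal_gen {n : ℕ} {p : BV → ℚ} {σ : BV → BV} {M : BV → BV → Prop} {W : BV → ℚ}
    (hp : ∀ v, IsBVertex n v → v ≠ BV.s → 0 < p v ∧ p v ≤ 1)
    (hW : BellB n σ W) (hM : ∀ v, IsBVertex n v → v ≠ BV.s → M v (σ v)) :
    DVal n p (gen σ M) = genV n p M W := by
  have hex : ∃! V : DV → ℚ, IsDVal n p (gen σ M) V ∧ ∀ u, ¬ IsDVertex n u → V u = 0 := by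
    refine ⟨genV n p M W, ⟨genV_isDVal hW hM, ?_⟩, ?_⟩
    · intro u hu; simp [genV, hu]
    · rintro V ⟨hV, hV0⟩
      exact genV_unique hp hW hM V hV hV0
  unfold DVal
  rw [dif_pos hex]
  have := hex.exists.choose_spec
  exact genV_unique hp hW hM _ this.1 this.2

/-- Classification of the improving switches of `gen σ M`. -/
theorem improving_cases {n : ℕ} {p : BV → ℚ} {σ : BV → BV} {M : BV → BV → Prop} {W : BV → ℚ}
    (hp : ∀ v, IsBVertex n v → v ≠ BV.s → 0 < p v ∧ p v ≤ 1)
    (hW : BellB n σ W) (hM : ∀ v, IsBVertex n v → v ≠ BV.s → M v (σ v)) {u u' : DV}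
    (h : DImproving n p (gen σ M) u u') :
    ∃ v w, DEdgePair n v w ∧
      ((u = DV.base v ∧ u' = DV.x v w ∧ M v w ∧ 0 < zz n W v w) ∨
       (u = DV.x v w ∧ u' = DV.base v ∧ M v w ∧ zz n W v w < 0) ∨
       (u = DV.x v w ∧ u' = DV.y v w ∧ ¬ M v w ∧ 0 < zz n W v w)) := by
  obtain ⟨he, hz⟩ := h
  unfold zD at hz
  rw [DVal_gen hp hW hM] at hz
  rcases he with ⟨v, w, he, h⟩ | ⟨rfl, rfl⟩
  · refine ⟨v, w, he, ?_⟩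
    have hv := (edge_vertex he.1).1
    have hw := (edge_vertex he.1).2
    have hpv := (hp v hv he.2).1
    rcases h with ⟨rfl, rfl⟩ | ⟨rfl, rfl⟩ | ⟨rfl, rfl⟩ | ⟨rfl, rfl⟩
    · left
      by_cases hm : M v w
      · simp only [rD, genV, IsDVertex, he, hv, hm, if_true] at hz
        have : 0 < p v * zz n W v w := by linarith
        exact ⟨rfl, rfl, hm, (mul_pos_iff_of_pos_left hpv).1 this⟩
      · simp [rD, genV, IsDVertex, he, hv, hm] at hz
    · right; left
      by_cases hm : M v w
      · simp only [rD, genV, IsDVertex, he, hv, hm, if_true] at hz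
        have : p v * zz n W v w < 0 := by linarith
        exact ⟨rfl, rfl, hm, by by_contra hc; push Not at hc; have := mul_nonneg hpv.le hc; linarith⟩
      · simp [rD, genV, IsDVertex, he, hv, hm] at hz
    · right; right
      by_cases hm : M v w
      · simp [rD, genV, IsDVertex, he, hm] at hz
      · simp only [rD, genV, IsDVertex, he, hm, if_true, if_false] at hz
        have : 0 < p v * zz n W v w := by linarith
        exact ⟨rfl, rfl, hm, (mul_pos_iff_of_pos_left hpv).1 this⟩
    · simp [rD, genV, IsDVertex, he, hw] at hz
  · simp [rD] at hz

theorem improving_of {n : ℕ} {p : BV → ℚ} {σ : BV → BV} {M : BV → BV → Prop} {W : BV → ℚ}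
    (hp : ∀ v, IsBVertex n v → v ≠ BV.s → 0 < p v ∧ p v ≤ 1)
    (hW : BellB n σ W) (hM : ∀ v, IsBVertex n v → v ≠ BV.s → M v (σ v)) {v w : BV}
    (he : DEdgePair n v w) :
    (M v w → 0 < zz n W v w → DImproving n p (gen σ M) (DV.base v) (DV.x v w)) ∧
    (M v w → zz n W v w < 0 → DImproving n p (gen σ M) (DV.x v w) (DV.base v)) ∧
    (¬ M v w → 0 < zz n W v w → DImproving n p (gen σ M) (DV.x v w) (DV.y v w)) := by
  have hv := (edge_vertex he.1).1
  have hpv := (hp v hv he.2).1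
  unfold DImproving zD
  rw [DVal_gen hp hW hM]
  refine ⟨fun hm hz => ⟨Or.inl ⟨v, w, he, by simp⟩, ?_⟩,
    fun hm hz => ⟨Or.inl ⟨v, w, he, by simp⟩, ?_⟩, fun hm hz => ⟨Or.inl ⟨v, w, he, by simp⟩, ?_⟩⟩
  · simp only [rD, genV, IsDVertex, he, hv, hm, if_true]
    have := mul_pos hpv hz; linarith
  · simp only [rD, genV, IsDVertex, he, hv, hm, if_true]
    have := mul_neg_of_pos_of_neg hpv hz; linarith
  · simp only [rD, genV, IsDVertex, he, hm, if_true, if_false]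
    have := mul_pos hpv hz; linarith

/-- If `e` is the minimal improving switch then the Bland step applies it. -/
theorem bland_det {n : ℕ} {p : BV → ℚ} {N : DV → DV → ℕ} (hN : IsDBlandNumbering n N)
    {f : ℕ → (DV → DV)} {m k : ℕ}
    (hstep : ∀ k < m, IsBlandStepD n p N (f k) (f (k + 1)))
    (hterm : ∀ u u', ¬ DImproving n p (f m) u u') (hk : k ≤ m) {u u' : DV}
    (hi : DImproving n p (f k) u u')
    (hmin : ∀ a b, DImproving n p (f k) a b → N u u' ≤ N a b) :
    k + 1 ≤ m ∧ f (k + 1) = Function.update (f k) u u' := by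
  have hlt : k < m := by
    rcases Nat.lt_or_eq_of_le hk with h | h
    · exact h
    · subst h; exact (hterm _ _ hi).elim
  refine ⟨hlt, ?_⟩
  obtain ⟨a, b, h1, h2, h3⟩ := hstep k hlt
  have := hN.1 u u' a b hi.1 h1.1 (le_antisymm (hmin a b h1) (h2 u u' hi))
  rw [h3, this.1, this.2]

theorem twin_eq_gen (π : BV → BV) : twin π = gen π (fun v w => w = π v) := by
  funext u
  cases u <;> simp [twin, gen]

/-- One Bland step on `𝔅_n` is simulated by three Bland steps on `𝔇_n`. -/
theorem simulate {n : ℕ} {p : BV → ℚ}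
    (hp : ∀ v, IsBVertex n v → v ≠ BV.s → 0 < p v ∧ p v ≤ 1)
    {N : DV → DV → ℕ} (hN : IsDBlandNumbering n N)
    {f : ℕ → (DV → DV)} {m k : ℕ}
    (hstep : ∀ k < m, IsBlandStepD n p N (f k) (f (k + 1)))
    (hterm : ∀ u u', ¬ DImproving n p (f m) u u') (hk : k ≤ m)
    {π : BV → BV} {W W' : BV → ℚ} {u w : BV} (hW : BellB n π W)
    (hW' : BellB n (Function.update π u w) W') (he : BEdge n u w) (hus : u ≠ BV.s)
    (hz : 0 < zz n W u w)
    (hmin : ∀ u' w', BEdge n u' w' → 0 < zz n W u' w' → (u' = u ∧ w' = w) ∨ NB n u w < NB n u' w')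
    (hf : f k = twin π) :
    k + 3 ≤ m ∧ f (k + 3) = twin (Function.update π u w) := by
  have hE : DEdgePair n u w := ⟨he, hus⟩
  have hu := (edge_vertex he).1
  obtain ⟨N0, N1, N2, N3, N4⟩ := hN
  have hN : IsDBlandNumbering n N := ⟨N0, N1, N2, N3, N4⟩
  have hz0 : ∀ v, IsBVertex n v → v ≠ BV.s → zz n W v (π v) = 0 := by
    intro v hv hs
    have := hW.2.2 v hv hs
    unfold zz; linarith
  have hne : w ≠ π u := by
    rintro rfl
    have := hz0 u hu hus
    linarith
  -- first step
  have s1 : k + 1 ≤ m ∧ f (k + 1) = Function.update (f k) (DV.x u w) (DV.y u w) := by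
    rw [twin_eq_gen] at hf
    have hM : ∀ v, IsBVertex n v → v ≠ BV.s → (fun v w => w = π v) v (π v) := fun _ _ _ => rfl
    apply bland_det hN hstep hterm hk
    · rw [hf]
      exact (improving_of (M := fun v w => w = π v) hp hW hM hE).2.2 hne hz
    · intro a b hab
      rw [hf] at hab
      obtain ⟨v, v', h1, h2⟩ := improving_cases (M := fun v w => w = π v) hp hW hM hab
      have hv := (edge_vertex h1.1).1
      rcases h2 with ⟨rfl, rfl, h3, h4⟩ | ⟨rfl, rfl, h3, h4⟩ | ⟨rfl, rfl, h3, h4⟩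
      · have := hz0 v hv h1.2; subst h3; linarith
      · have := hz0 v hv h1.2; subst h3; linarith
      · rcases hmin v v' h1.1 h4 with ⟨rfl, rfl⟩ | h5
        · exact le_rfl
        · exact ((N2 u w hE).trans (N3 u w v v' hE h1 h5)).le
  obtain ⟨hk1, hf1⟩ := s1
  have hf1' : f (k + 1) = gen π (fun v v' => v' = π v ∨ (v = u ∧ v' = w)) := by
    rw [hf1, hf]
    funext x
    cases x <;> simp only [Function.update_apply, twin, gen] <;> grind
  have s2 : k + 1 + 1 ≤ m ∧ f (k + 1 + 1) = Function.update (f (k + 1)) (DV.base u) (DV.x u w) := by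
    have hM : ∀ v, IsBVertex n v → v ≠ BV.s →
        (fun v v' => v' = π v ∨ (v = u ∧ v' = w)) v (π v) := fun _ _ _ => Or.inl rfl
    apply bland_det hN hstep hterm hk1
    · rw [hf1']
      exact (improving_of (M := fun v v' => v' = π v ∨ (v = u ∧ v' = w)) hp hW hM hE).1 (Or.inr ⟨rfl, rfl⟩) hz
    · intro a b hab
      rw [hf1'] at hab
      obtain ⟨v, v', h1, h2⟩ := improving_cases (M := fun v v' => v' = π v ∨ (v = u ∧ v' = w)) hp hW hM hab
      have hv := (edge_vertex h1.1).1
      rcases h2 with ⟨rfl, rfl, h3, h4⟩ | ⟨rfl, rfl, h3, h4⟩ | ⟨rfl, rfl, h3, h4⟩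
      · rcases h3 with h3 | ⟨rfl, rfl⟩
        · have := hz0 v hv h1.2; subst h3; linarith
        · exact le_rfl
      · rcases h3 with h3 | ⟨rfl, rfl⟩
        · have := hz0 v hv h1.2; subst h3; linarith
        · linarith
      · rcases hmin v v' h1.1 h4 with ⟨rfl, rfl⟩ | h5
        · exact (h3 (Or.inr ⟨rfl, rfl⟩)).elim
        · exact (N3 u w v v' hE h1 h5).le
  obtain ⟨hk2, hf2⟩ := s2
  have hf2' : f (k + 1 + 1) =
      gen (Function.update π u w) (fun v v' => v' = π v ∨ (v = u ∧ v' = w)) := by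
    rw [hf2, hf1']
    funext x
    cases x <;> simp only [Function.update_apply, gen] <;> grind
  have hz0' : ∀ v, IsBVertex n v → v ≠ BV.s → zz n W' v (Function.update π u w v) = 0 := by
    intro v hv hs
    have := hW'.2.2 v hv hs
    unfold zz; linarith
  have hEo : DEdgePair n u (π u) := ⟨hW.1 u hu, hus⟩
  have s3 : k + 1 + 1 + 1 ≤ m ∧
      f (k + 1 + 1 + 1) = Function.update (f (k + 1 + 1)) (DV.x u (π u)) (DV.base u) := by
    have hM : ∀ v, IsBVertex n v → v ≠ BV.s →
        (fun v v' => v' = π v ∨ (v = u ∧ v' = w)) v (Function.update π u w v) := by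
      intro v _ _
      by_cases h : v = u
      · subst h; simp
      · simp [h]
    apply bland_det hN hstep hterm hk2
    · rw [hf2']
      exact (improving_of (M := fun v v' => v' = π v ∨ (v = u ∧ v' = w)) hp hW' hM hEo).2.1 (Or.inl rfl) (old_edge_neg hW hW' hu hus hz)
    · intro a b hab
      rw [hf2'] at hab
      obtain ⟨v, v', h1, h2⟩ := improving_cases (M := fun v v' => v' = π v ∨ (v = u ∧ v' = w)) hp hW' hM hab
      have hv := (edge_vertex h1.1).1
      rcases h2 with ⟨rfl, rfl, h3, h4⟩ | ⟨rfl, rfl, h3, h4⟩ | ⟨rfl, rfl, h3, h4⟩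
      · exact ((N1 u (π u) v v' hEo h1).trans (N2 v v' h1)).le
      · by_cases hvu : v = u
        · subst hvu
          rcases h3 with rfl | ⟨_, rfl⟩
          · exact le_rfl
          · have := hz0' v hv h1.2
            rw [Function.update_self] at this
            linarith
        · have := hz0' v hv h1.2
          rw [Function.update_of_ne hvu] at this
          rcases h3 with rfl | ⟨h, _⟩
          · linarith
          · exact (hvu h).elim
      · exact (N1 u (π u) v v' hEo h1).le
  obtain ⟨hk3, hf3⟩ := s3
  refine ⟨hk3, ?_⟩
  have : k + 3 = k + 1 + 1 + 1 := rfl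
  rw [this, hf3, hf2']
  funext x
  cases x <;> simp only [Function.update_apply, gen, twin] <;> grind

/-! ## Level-wise description of policies and values of `𝔅_n` -/

/-- The three choices at a vertex `a i`. -/
inductive Act : Type where
  | E : Act
  | S : Act
  | G : Act
deriving DecidableEq

/-- A policy (`α`, `β`, `τ`) together with values (`A`, `B`, `T`). -/
structure St : Type where
  α : ℕ → Act
  β : ℕ → Bool
  τ : ℕ
  A : ℕ → ℚ
  B : ℕ → ℚ
  T : ℚ

/-- The Bellman equations, level by level. -/
structure Bell (n : ℕ) (s : St) : Prop where
  At : s.A (n + 1) = 0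
  Bt : s.B (n + 1) = 0
  τ1 : 1 ≤ s.τ
  τn : s.τ ≤ n
  hT : s.T = s.A s.τ
  hE : ∀ i, 1 ≤ i → i ≤ n → s.α i = Act.E → s.A i = 2 ^ i + s.B i
  hS : ∀ i, 1 ≤ i → i ≤ n → s.α i = Act.S → s.A i = s.A (i + 1)
  hG : ∀ i, 1 ≤ i → i ≤ n → s.α i = Act.G → s.A i = s.T - 2 ^ i + 5 / 4
  hs : ∀ i, 1 ≤ i → i ≤ n → s.β i = true → s.B i = 3 / 4 + s.B (i + 1)
  hl : ∀ i, 1 ≤ i → i ≤ n → s.β i = false → s.B i = s.A (i + 1)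

/-- The policy of `𝔅_n` described by a state. -/
def pol (n : ℕ) (s : St) : BV → BV
  | BV.t => BV.a s.τ
  | BV.s => BV.s
  | BV.d => BV.s
  | BV.a i => match s.α i with
    | Act.E => BV.b i
    | Act.S => aN n (i + 1)
    | Act.G => BV.t
  | BV.b i => if s.β i = true then bN n (i + 1) else aN n (i + 1)

/-- The value function described by a state. -/
def val (s : St) : BV → ℚ
  | BV.t => s.T
  | BV.s => 0
  | BV.d => 0
  | BV.a i => s.A i
  | BV.b i => s.B i

theorem val_aN {n : ℕ} {s : St} (h : s.A (n + 1) = 0) (i : ℕ) : val s (aN n i) = s.A i := by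
  unfold aN; split_ifs with hi
  · subst hi; simp [val, h]
  · rfl

theorem val_bN {n : ℕ} {s : St} (h : s.B (n + 1) = 0) (i : ℕ) : val s (bN n i) = s.B i := by
  unfold bN; split_ifs with hi
  · subst hi; simp [val, h]
  · rfl

theorem edge_enter {n i : ℕ} (h1 : 1 ≤ i) (h2 : i ≤ n) : BEdge n (BV.a i) (BV.b i) :=
  Or.inr (Or.inl ⟨i, h1, h2, rfl, rfl⟩)
theorem edge_skip {n i : ℕ} (h1 : 1 ≤ i) (h2 : i ≤ n) : BEdge n (BV.a i) (aN n (i + 1)) :=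
  Or.inr (Or.inr (Or.inl ⟨i, h1, h2, rfl, rfl⟩))
theorem edge_board {n i : ℕ} (h1 : 1 ≤ i) (h2 : i ≤ n) : BEdge n (BV.a i) BV.t :=
  Or.inr (Or.inr (Or.inr (Or.inl ⟨i, h1, h2, rfl, rfl⟩)))
theorem edge_stay {n i : ℕ} (h1 : 1 ≤ i) (h2 : i ≤ n) : BEdge n (BV.b i) (bN n (i + 1)) :=
  Or.inr (Or.inr (Or.inr (Or.inr (Or.inl ⟨i, h1, h2, rfl, rfl⟩))))
theorem edge_leave {n i : ℕ} (h1 : 1 ≤ i) (h2 : i ≤ n) : BEdge n (BV.b i) (aN n (i + 1)) :=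
  Or.inr (Or.inr (Or.inr (Or.inr (Or.inr (Or.inl ⟨i, h1, h2, rfl, rfl⟩)))))

theorem bell_bellB {n : ℕ} {s : St} (h : Bell n s) : BellB n (pol n s) (val s) := by
  refine ⟨?_, rfl, ?_⟩
  · intro v hv
    cases v with
    | t => exact Or.inl ⟨s.τ, h.τ1, h.τn, rfl, rfl⟩
    | s => simp [BEdge, pol]
    | d => simp [BEdge, pol]
    | a i =>
      simp only [pol]
      cases hα : s.α i with
      | E => exact edge_enter hv.1 hv.2
      | S => exact edge_skip hv.1 hv.2
      | G => exact edge_board hv.1 hv.2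
    | b i =>
      simp only [pol]
      split_ifs
      · exact edge_stay hv.1 hv.2
      · exact edge_leave hv.1 hv.2
  · intro v hv hne
    cases v with
    | t => simp [pol, val, rB, h.hT]
    | s => simp at hne
    | d => simp [pol, val, rB]
    | a i =>
      simp only [pol]
      cases hα : s.α i with
      | E => simp only [r_enter]; exact h.hE i hv.1 hv.2 hα
      | S => simp only [r_skip, val_aN h.At, zero_add]; exact h.hS i hv.1 hv.2 hα
      | G => simp only [r_board]; simp only [val]; rw [h.hG i hv.1 hv.2 hα]; ring
    | b i =>
      simp only [pol]
      split_ifs with hβ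
      · rw [r_stay, val_bN h.Bt]; exact h.hs i hv.1 hv.2 hβ
      · rw [r_leave, val_aN h.At, zero_add]; exact h.hl i hv.1 hv.2 (by simpa using hβ)

/-- Values computed from the top level downwards, given the value `T` of the vertex `t`. -/
def vv (n : ℕ) (α : ℕ → Act) (β : ℕ → Bool) (T : ℚ) : ℕ → ℚ × ℚ
  | 0 => (0, 0)
  | k + 1 =>
    let q := vv n α β T k
    let b : ℚ := if β (n - k) = true then 3 / 4 + q.2 else q.1
    ((match α (n - k) with
      | Act.E => 2 ^ (n - k) + b
      | Act.S => q.1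
      | Act.G => T - 2 ^ (n - k) + 5 / 4), b)

theorem pow_ge_two {i : ℕ} (h : 1 ≤ i) : (2 : ℚ) ≤ 2 ^ i := by
  calc (2 : ℚ) = 2 ^ 1 := by norm_num
    _ ≤ 2 ^ i := pow_le_pow_right₀ (by norm_num) h

/-- Existence of values for a policy that admits a subsolution. -/
theorem exists_bell {n : ℕ} (α : ℕ → Act) (β : ℕ → Bool) (τ : ℕ) (A0 B0 : ℕ → ℚ) (T0 : ℚ)
    (hA : A0 (n + 1) = 0) (hB : B0 (n + 1) = 0) (τ1 : 1 ≤ τ) (τn : τ ≤ n) (hT : T0 ≤ A0 τ)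
    (hE : ∀ i, 1 ≤ i → i ≤ n → α i = Act.E → A0 i ≤ 2 ^ i + B0 i)
    (hS : ∀ i, 1 ≤ i → i ≤ n → α i = Act.S → A0 i ≤ A0 (i + 1))
    (hG : ∀ i, 1 ≤ i → i ≤ n → α i = Act.G → A0 i ≤ T0 - 2 ^ i + 5 / 4)
    (hs : ∀ i, 1 ≤ i → i ≤ n → β i = true → B0 i ≤ 3 / 4 + B0 (i + 1))
    (hl : ∀ i, 1 ≤ i → i ≤ n → β i = false → B0 i ≤ A0 (i + 1)) :
    ∃ A B T, Bell n ⟨α, β, τ, A, B, T⟩ := by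
  have key : ∀ k i, i + k = n + 1 → 1 ≤ i →
      ((∃ c, A0 i ≤ c ∧ ∀ T, (vv n α β T k).1 = c) ∨
        (∃ c, c ≤ 5 / 4 - 2 ^ i ∧ A0 i ≤ T0 + c ∧ ∀ T, (vv n α β T k).1 = T + c)) ∧
      ((∃ c, B0 i ≤ c ∧ ∀ T, (vv n α β T k).2 = c) ∨
        (∃ c, c ≤ 5 / 4 - 2 ^ (i + 1) ∧ B0 i ≤ T0 + c ∧ ∀ T, (vv n α β T k).2 = T + c)) := by
    intro k
    induction k with
    | zero =>
      intro i hi _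
      have : i = n + 1 := by omega
      subst this
      exact ⟨Or.inl ⟨0, hA.le, fun _ => rfl⟩, Or.inl ⟨0, hB.le, fun _ => rfl⟩⟩
    | succ k ih =>
      intro i hi h1
      have hin : i ≤ n := by omega
      have hnk : n - k = i := by omega
      obtain ⟨iha, ihb⟩ := ih (i + 1) (by omega) (by omega)
      have hge := pow_ge_two h1
      have e1 : (2 : ℚ) ^ (i + 1) = 2 * 2 ^ i := by ring
      have e2 : (2 : ℚ) ^ (i + 1 + 1) = 4 * 2 ^ i := by ring
      rw [e1] at iha ⊢
      rw [e2] at ihb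
      have hb : (∃ c, B0 i ≤ c ∧ ∀ T, (vv n α β T (k + 1)).2 = c) ∨
        (∃ c, c ≤ 5 / 4 - 2 * 2 ^ i ∧ B0 i ≤ T0 + c ∧ ∀ T, (vv n α β T (k + 1)).2 = T + c) := by
        simp only [vv, hnk]
        cases hβ : β i with
        | true =>
          have := hs i h1 hin hβ
          simp only [if_true]
          rcases ihb with ⟨c, g1, g2⟩ | ⟨c, g0, g1, g2⟩
          · left; exact ⟨3 / 4 + c, by linarith, fun T => by rw [g2]⟩
          · right; exact ⟨3 / 4 + c, by linarith, by linarith, fun T => by rw [g2]; ring⟩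
        | false =>
          have := hl i h1 hin hβ
          simp only [Bool.false_eq_true, if_false]
          rcases iha with ⟨c, g1, g2⟩ | ⟨c, g0, g1, g2⟩
          · left; exact ⟨c, by linarith, fun T => by rw [g2]⟩
          · right; exact ⟨c, by linarith, by linarith, fun T => by rw [g2]⟩
      refine ⟨?_, hb⟩
      cases hα : α i with
      | E =>
        have := hE i h1 hin hα
        have hv : ∀ T, (vv n α β T (k + 1)).1 = 2 ^ i + (vv n α β T (k + 1)).2 := by
          intro T; simp only [vv, hnk, hα]
        rcases hb with ⟨c, g1, g2⟩ | ⟨c, g0, g1, g2⟩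
        · left; exact ⟨2 ^ i + c, by linarith, fun T => by rw [hv, g2]⟩
        · right; exact ⟨2 ^ i + c, by linarith, by linarith, fun T => by rw [hv, g2]; ring⟩
      | S =>
        have := hS i h1 hin hα
        have hv : ∀ T, (vv n α β T (k + 1)).1 = (vv n α β T k).1 := by
          intro T; simp only [vv, hnk, hα]
        rcases iha with ⟨c, g1, g2⟩ | ⟨c, g0, g1, g2⟩
        · left; exact ⟨c, by linarith, fun T => by rw [hv, g2]⟩
        · right; exact ⟨c, by linarith, by linarith, fun T => by rw [hv, g2]⟩
      | G =>
        have := hG i h1 hin hα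
        right
        exact ⟨-2 ^ i + 5 / 4, by linarith, by linarith, fun T => by
          simp only [vv, hnk, hα]; ring⟩
  have hk := (key (n + 1 - τ) τ (by omega) τ1).1
  rcases hk with ⟨c, g1, g2⟩ | ⟨c, g0, g1, g2⟩
  swap
  · have := pow_ge_two τ1; linarith
  have hstep : ∀ i, 1 ≤ i → i ≤ n → n + 1 - i = (n - i) + 1 ∧ n - (n - i) = i ∧
      n + 1 - (i + 1) = n - i := by intros; omega
  refine ⟨fun i => (vv n α β c (n + 1 - i)).1, fun i => (vv n α β c (n + 1 - i)).2, c,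
    ⟨?_, ?_, τ1, τn, ?_, ?_, ?_, ?_, ?_, ?_⟩⟩
  · simp [vv]
  · simp [vv]
  · exact (g2 c).symm
  all_goals
    intro i h1 h2 h
    obtain ⟨e1, e2, e3⟩ := hstep i h1 h2
    simp only at h
    simp only [e1, e3, vv, e2, h]
    try simp

/-- A Bland step between states. -/
def Stp (n : ℕ) (s s' : St) : Prop :=
  Bell n s ∧ Bell n s' ∧ ∃ u w, u ≠ BV.s ∧ BEdge n u w ∧ 0 < zz n (val s) u w ∧
    (∀ u' w', BEdge n u' w' → 0 < zz n (val s) u' w' →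
      (u' = u ∧ w' = w) ∨ NB n u w < NB n u' w') ∧
    pol n s' = Function.update (pol n s) u w

theorem nb_skip (n i j : ℕ) : NB n (BV.a i) (aN n j) = n + 2 + 5 * (i - 1) := by
  unfold aN; split_ifs <;> rfl
theorem nb_stay (n i j : ℕ) : NB n (BV.b i) (bN n j) = n + 4 + 5 * (i - 1) := by
  unfold bN; split_ifs <;> rfl
theorem nb_leave (n i j : ℕ) : NB n (BV.b i) (aN n j) = n + 5 + 5 * (i - 1) := by
  unfold aN; split_ifs <;> rfl

theorem edge_cases {n : ℕ} {s : St} (h : Bell n s) {u w : BV} (he : BEdge n u w)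
    (hz : 0 < zz n (val s) u w) :
    ∃ k, 1 ≤ k ∧ k ≤ n ∧
    ((u = BV.t ∧ w = BV.a k ∧ s.T < s.A k ∧ NB n u w = k) ∨
     (u = BV.a k ∧ w = BV.b k ∧ s.A k < 2 ^ k + s.B k ∧ NB n u w = n + 1 + 5 * (k - 1)) ∨
     (u = BV.a k ∧ w = aN n (k + 1) ∧ s.A k < s.A (k + 1) ∧ NB n u w = n + 2 + 5 * (k - 1)) ∨
     (u = BV.a k ∧ w = BV.t ∧ s.A k < s.T - 2 ^ k + 5 / 4 ∧ NB n u w = n + 3 + 5 * (k - 1)) ∨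
     (u = BV.b k ∧ w = bN n (k + 1) ∧ s.B k < 3 / 4 + s.B (k + 1) ∧
        NB n u w = n + 4 + 5 * (k - 1)) ∨
     (u = BV.b k ∧ w = aN n (k + 1) ∧ s.B k < s.A (k + 1) ∧ NB n u w = n + 5 + 5 * (k - 1))) := by
  unfold zz at hz
  rcases he with ⟨i, h1, h2, rfl, rfl⟩ | ⟨i, h1, h2, rfl, rfl⟩ | ⟨i, h1, h2, rfl, rfl⟩ |
    ⟨i, h1, h2, rfl, rfl⟩ | ⟨i, h1, h2, rfl, rfl⟩ | ⟨i, h1, h2, rfl, rfl⟩ | ⟨rfl, rfl⟩ | ⟨rfl, rfl⟩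
  · refine ⟨i, h1, h2, Or.inl ⟨rfl, rfl, ?_, rfl⟩⟩
    rw [r_travel] at hz; simp only [val] at hz; linarith
  · refine ⟨i, h1, h2, Or.inr (Or.inl ⟨rfl, rfl, ?_, rfl⟩)⟩
    rw [r_enter] at hz; simp only [val] at hz; linarith
  · refine ⟨i, h1, h2, Or.inr (Or.inr (Or.inl ⟨rfl, rfl, ?_, nb_skip _ _ _⟩))⟩
    rw [r_skip, val_aN h.At] at hz; simp only [val] at hz; linarith
  · refine ⟨i, h1, h2, Or.inr (Or.inr (Or.inr (Or.inl ⟨rfl, rfl, ?_, rfl⟩)))⟩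
    rw [r_board] at hz; simp only [val] at hz; linarith
  · refine ⟨i, h1, h2, Or.inr (Or.inr (Or.inr (Or.inr (Or.inl ⟨rfl, rfl, ?_, nb_stay _ _ _⟩))))⟩
    rw [r_stay, val_bN h.Bt] at hz; simp only [val] at hz; linarith
  · refine ⟨i, h1, h2, Or.inr (Or.inr (Or.inr (Or.inr (Or.inr ⟨rfl, rfl, ?_, nb_leave _ _ _⟩))))⟩
    rw [r_leave, val_aN h.At] at hz; simp only [val] at hz; linarith
  · simp [rB, val] at hz
  · simp [rB, val] at hz

/-- No improving travel edge. -/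
def TrOK (n : ℕ) (s : St) : Prop := ∀ k, 1 ≤ k → k ≤ n → s.A k ≤ s.T

/-- No improving edge in level `k`. -/
structure LevOK (s : St) (k : ℕ) : Prop where
  e : 2 ^ k + s.B k ≤ s.A k
  sk : s.A (k + 1) ≤ s.A k
  bd : s.T - 2 ^ k + 5 / 4 ≤ s.A k
  st : 3 / 4 + s.B (k + 1) ≤ s.B k
  lv : s.A (k + 1) ≤ s.B k

theorem step_travel {n : ℕ} {s : St} (h : Bell n s) {i : ℕ} (h1 : 1 ≤ i) (h2 : i ≤ n)
    (hz : s.T < s.A i) (hlow : ∀ k, 1 ≤ k → k < i → s.A k ≤ s.T) :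
    ∃ s', Stp n s s' ∧ s'.α = s.α ∧ s'.β = s.β ∧ s'.τ = i := by
  obtain ⟨A, B, T, hb⟩ := exists_bell (n := n) s.α s.β i s.A s.B s.T h.At h.Bt h1 h2 hz.le
    (fun k a b c => (h.hE k a b c).le) (fun k a b c => (h.hS k a b c).le)
    (fun k a b c => (h.hG k a b c).le) (fun k a b c => (h.hs k a b c).le)
    (fun k a b c => (h.hl k a b c).le)
  refine ⟨_, ⟨h, hb, BV.t, BV.a i, by simp, Or.inl ⟨i, h1, h2, rfl, rfl⟩, ?_, ?_, ?_⟩, rfl, rfl, rfl⟩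
  · unfold zz; rw [r_travel]; simp only [val]; linarith
  · intro u' w' he' hz'
    have hnb : NB n BV.t (BV.a i) = i := rfl
    obtain ⟨k, k1, k2, hk⟩ := edge_cases h he' hz'
    rw [hnb]
    rcases hk with ⟨rfl, rfl, g, g'⟩ | ⟨_, _, _, g'⟩ | ⟨_, _, _, g'⟩ | ⟨_, _, _, g'⟩ | ⟨_, _, _, g'⟩ |
      ⟨_, _, _, g'⟩
    · rcases lt_trichotomy k i with hki | rfl | hki
      · have := hlow k k1 hki; linarith
      · exact Or.inl ⟨rfl, rfl⟩
      · right; omega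
    all_goals right; omega
  · funext v; cases v <;> simp [pol]

theorem step_enter {n : ℕ} {s : St} (h : Bell n s) {i : ℕ} (h1 : 1 ≤ i) (h2 : i ≤ n)
    (hz : s.A i < 2 ^ i + s.B i) (htr : TrOK n s) (hlow : ∀ k, 1 ≤ k → k < i → LevOK s k) :
    ∃ s', Stp n s s' ∧ s'.α = (fun k => if k = i then Act.E else s.α k) ∧ s'.β = s.β ∧
      s'.τ = s.τ := by
  obtain ⟨A, B, T, hb⟩ := exists_bell (n := n) (fun k => if k = i then Act.E else s.α k)
    s.β s.τ s.A s.B s.T h.At h.Bt h.τ1 h.τn h.hT.le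
    (fun k a b c => by by_cases hk : k = i
                       · subst hk; exact hz.le
                       · simp only [hk, if_false] at c; exact (h.hE k a b c).le)
    (fun k a b c => by by_cases hk : k = i
                       · simp [hk] at c
                       · simp only [hk, if_false] at c; exact (h.hS k a b c).le)
    (fun k a b c => by by_cases hk : k = i
                       · simp [hk] at c
                       · simp only [hk, if_false] at c; exact (h.hG k a b c).le)
    (fun k a b c => (h.hs k a b c).le)
    (fun k a b c => (h.hl k a b c).le)
  refine ⟨_, ⟨h, hb, BV.a i, BV.b i, by simp, edge_enter h1 h2, ?_, ?_, ?_⟩, rfl, rfl, rfl⟩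
  · unfold zz; rw [r_enter]; simp only [val]; linarith
  · intro u' w' he' hz'
    have hnb : NB n (BV.a i) (BV.b i) = n + 1 + 5 * (i - 1) := rfl
    obtain ⟨k, k1, k2, hk⟩ := edge_cases h he' hz'
    rw [hnb]
    have hlow' := hlow k k1
    rcases hk with ⟨rfl, rfl, g, g'⟩ | hk
    · have := htr k k1 k2; linarith
    rcases lt_trichotomy k i with hki | rfl | hki
    · obtain ⟨c1, c2, c3, c4, c5⟩ := hlow k k1 hki
      rcases hk with ⟨_, _, g, g'⟩ | ⟨_, _, g, g'⟩ | ⟨_, _, g, g'⟩ | ⟨_, _, g, g'⟩ | ⟨_, _, g, g'⟩ <;>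
        linarith
    · rcases hk with ⟨h3, h4, g, g'⟩ | ⟨_, _, g, g'⟩ | ⟨_, _, g, g'⟩ | ⟨_, _, g, g'⟩ | ⟨_, _, g, g'⟩
      · exact Or.inl ⟨h3, h4⟩
      all_goals right; omega
    · right
      rcases hk with ⟨_, _, g, g'⟩ | ⟨_, _, g, g'⟩ | ⟨_, _, g, g'⟩ | ⟨_, _, g, g'⟩ | ⟨_, _, g, g'⟩ <;>
        omega
  · funext v
    cases v with
    | a k => by_cases hk : k = i <;> simp [pol, hk, Function.update_apply]
    | _ => simp [pol]

theorem step_skip {n : ℕ} {s : St} (h : Bell n s) {i : ℕ} (h1 : 1 ≤ i) (h2 : i ≤ n)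
    (hz : s.A i < s.A (i + 1)) (htr : TrOK n s) (hlow : ∀ k, 1 ≤ k → k < i → LevOK s k)
    (h3 : 2 ^ i + s.B i ≤ s.A i) :
    ∃ s', Stp n s s' ∧ s'.α = (fun k => if k = i then Act.S else s.α k) ∧ s'.β = s.β ∧
      s'.τ = s.τ := by
  obtain ⟨A, B, T, hb⟩ := exists_bell (n := n) (fun k => if k = i then Act.S else s.α k)
    s.β s.τ s.A s.B s.T h.At h.Bt h.τ1 h.τn h.hT.le
    (fun k a b c => by by_cases hk : k = i
                       · simp [hk] at c
                       · simp only [hk, if_false] at c; exact (h.hE k a b c).le)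
    (fun k a b c => by by_cases hk : k = i
                       · subst hk; exact hz.le
                       · simp only [hk, if_false] at c; exact (h.hS k a b c).le)
    (fun k a b c => by by_cases hk : k = i
                       · simp [hk] at c
                       · simp only [hk, if_false] at c; exact (h.hG k a b c).le)
    (fun k a b c => (h.hs k a b c).le)
    (fun k a b c => (h.hl k a b c).le)
  refine ⟨_, ⟨h, hb, BV.a i, aN n (i + 1), by simp, edge_skip h1 h2, ?_, ?_, ?_⟩, rfl, rfl, rfl⟩
  · unfold zz; rw [r_skip, val_aN h.At]; simp only [val]; linarith
  · intro u' w' he' hz'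
    obtain ⟨k, k1, k2, hk⟩ := edge_cases h he' hz'
    rw [nb_skip]
    rcases hk with ⟨rfl, rfl, g, g'⟩ | hk
    · have := htr k k1 k2; linarith
    rcases lt_trichotomy k i with hki | rfl | hki
    · obtain ⟨c1, c2, c3, c4, c5⟩ := hlow k k1 hki
      rcases hk with ⟨_, _, g, g'⟩ | ⟨_, _, g, g'⟩ | ⟨_, _, g, g'⟩ | ⟨_, _, g, g'⟩ | ⟨_, _, g, g'⟩ <;>
        linarith
    · rcases hk with ⟨_, _, g, g'⟩ | ⟨h3, h4, g, g'⟩ | ⟨_, _, g, g'⟩ | ⟨_, _, g, g'⟩ | ⟨_, _, g, g'⟩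
      · linarith
      · exact Or.inl ⟨h3, h4⟩
      all_goals right; omega
    · right
      rcases hk with ⟨_, _, g, g'⟩ | ⟨_, _, g, g'⟩ | ⟨_, _, g, g'⟩ | ⟨_, _, g, g'⟩ | ⟨_, _, g, g'⟩ <;>
        omega
  · funext v
    cases v with
    | a k => by_cases hk : k = i <;> simp [pol, hk, Function.update_apply]
    | _ => simp [pol]

theorem step_board {n : ℕ} {s : St} (h : Bell n s) {i : ℕ} (h1 : 1 ≤ i) (h2 : i ≤ n)
    (hz : s.A i < s.T - 2 ^ i + 5 / 4) (htr : TrOK n s) (hlow : ∀ k, 1 ≤ k → k < i → LevOK s k)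
    (h3 : 2 ^ i + s.B i ≤ s.A i) (h4 : s.A (i + 1) ≤ s.A i) :
    ∃ s', Stp n s s' ∧ s'.α = (fun k => if k = i then Act.G else s.α k) ∧ s'.β = s.β ∧
      s'.τ = s.τ := by
  obtain ⟨A, B, T, hb⟩ := exists_bell (n := n) (fun k => if k = i then Act.G else s.α k)
    s.β s.τ s.A s.B s.T h.At h.Bt h.τ1 h.τn h.hT.le
    (fun k a b c => by by_cases hk : k = i
                       · simp [hk] at c
                       · simp only [hk, if_false] at c; exact (h.hE k a b c).le)
    (fun k a b c => by by_cases hk : k = i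
                       · simp [hk] at c
                       · simp only [hk, if_false] at c; exact (h.hS k a b c).le)
    (fun k a b c => by by_cases hk : k = i
                       · subst hk; exact hz.le
                       · simp only [hk, if_false] at c; exact (h.hG k a b c).le)
    (fun k a b c => (h.hs k a b c).le)
    (fun k a b c => (h.hl k a b c).le)
  refine ⟨_, ⟨h, hb, BV.a i, BV.t, by simp, edge_board h1 h2, ?_, ?_, ?_⟩, rfl, rfl, rfl⟩
  · unfold zz; rw [r_board]; simp only [val]; linarith
  · intro u' w' he' hz'
    have hnb : NB n (BV.a i) BV.t = n + 3 + 5 * (i - 1) := rfl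
    obtain ⟨k, k1, k2, hk⟩ := edge_cases h he' hz'
    rw [hnb]
    rcases hk with ⟨rfl, rfl, g, g'⟩ | hk
    · have := htr k k1 k2; linarith
    rcases lt_trichotomy k i with hki | rfl | hki
    · obtain ⟨c1, c2, c3, c4, c5⟩ := hlow k k1 hki
      rcases hk with ⟨_, _, g, g'⟩ | ⟨_, _, g, g'⟩ | ⟨_, _, g, g'⟩ | ⟨_, _, g, g'⟩ | ⟨_, _, g, g'⟩ <;>
        linarith
    · rcases hk with ⟨_, _, g, g'⟩ | ⟨_, _, g, g'⟩ | ⟨h3, h4, g, g'⟩ | ⟨_, _, g, g'⟩ | ⟨_, _, g, g'⟩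
      · linarith
      · linarith
      · exact Or.inl ⟨h3, h4⟩
      all_goals right; omega
    · right
      rcases hk with ⟨_, _, g, g'⟩ | ⟨_, _, g, g'⟩ | ⟨_, _, g, g'⟩ | ⟨_, _, g, g'⟩ | ⟨_, _, g, g'⟩ <;>
        omega
  · funext v
    cases v with
    | a k => by_cases hk : k = i <;> simp [pol, hk, Function.update_apply]
    | _ => simp [pol]

theorem step_stay {n : ℕ} {s : St} (h : Bell n s) {i : ℕ} (h1 : 1 ≤ i) (h2 : i ≤ n)
    (hz : s.B i < 3 / 4 + s.B (i + 1)) (htr : TrOK n s) (hlow : ∀ k, 1 ≤ k → k < i → LevOK s k)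
    (h3 : 2 ^ i + s.B i ≤ s.A i) (h4 : s.A (i + 1) ≤ s.A i) (h5 : s.T - 2 ^ i + 5 / 4 ≤ s.A i) :
    ∃ s', Stp n s s' ∧ s'.α = s.α ∧ s'.β = (fun k => if k = i then true else s.β k) ∧
      s'.τ = s.τ := by
  obtain ⟨A, B, T, hb⟩ := exists_bell (n := n) s.α (fun k => if k = i then true else s.β k)
    s.τ s.A s.B s.T h.At h.Bt h.τ1 h.τn h.hT.le
    (fun k a b c => (h.hE k a b c).le) (fun k a b c => (h.hS k a b c).le)
    (fun k a b c => (h.hG k a b c).le)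
    (fun k a b c => by by_cases hk : k = i
                       · subst hk; exact hz.le
                       · simp only [hk, if_false] at c; exact (h.hs k a b c).le)
    (fun k a b c => by by_cases hk : k = i
                       · simp [hk] at c
                       · simp only [hk, if_false] at c; exact (h.hl k a b c).le)
  refine ⟨_, ⟨h, hb, BV.b i, bN n (i + 1), by simp, edge_stay h1 h2, ?_, ?_, ?_⟩, rfl, rfl, rfl⟩
  · unfold zz; rw [r_stay, val_bN h.Bt]; simp only [val]; linarith
  · intro u' w' he' hz'
    obtain ⟨k, k1, k2, hk⟩ := edge_cases h he' hz'
    rw [nb_stay]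
    rcases hk with ⟨rfl, rfl, g, g'⟩ | hk
    · have := htr k k1 k2; linarith
    rcases lt_trichotomy k i with hki | rfl | hki
    · obtain ⟨c1, c2, c3, c4, c5⟩ := hlow k k1 hki
      rcases hk with ⟨_, _, g, g'⟩ | ⟨_, _, g, g'⟩ | ⟨_, _, g, g'⟩ | ⟨_, _, g, g'⟩ | ⟨_, _, g, g'⟩ <;>
        linarith
    · rcases hk with ⟨_, _, g, g'⟩ | ⟨_, _, g, g'⟩ | ⟨_, _, g, g'⟩ | ⟨h3, h4, g, g'⟩ | ⟨_, _, g, g'⟩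
      · linarith
      · linarith
      · linarith
      · exact Or.inl ⟨h3, h4⟩
      · right; omega
    · right
      rcases hk with ⟨_, _, g, g'⟩ | ⟨_, _, g, g'⟩ | ⟨_, _, g, g'⟩ | ⟨_, _, g, g'⟩ | ⟨_, _, g, g'⟩ <;>
        omega
  · funext v
    cases v with
    | b k => by_cases hk : k = i <;> simp [pol, hk, Function.update_apply]
    | _ => simp [pol]

theorem step_leave {n : ℕ} {s : St} (h : Bell n s) {i : ℕ} (h1 : 1 ≤ i) (h2 : i ≤ n)
    (hz : s.B i < s.A (i + 1)) (htr : TrOK n s) (hlow : ∀ k, 1 ≤ k → k < i → LevOK s k)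
    (h3 : 2 ^ i + s.B i ≤ s.A i) (h4 : s.A (i + 1) ≤ s.A i) (h5 : s.T - 2 ^ i + 5 / 4 ≤ s.A i)
    (h6 : 3 / 4 + s.B (i + 1) ≤ s.B i) :
    ∃ s', Stp n s s' ∧ s'.α = s.α ∧ s'.β = (fun k => if k = i then false else s.β k) ∧
      s'.τ = s.τ := by
  obtain ⟨A, B, T, hb⟩ := exists_bell (n := n) s.α (fun k => if k = i then false else s.β k)
    s.τ s.A s.B s.T h.At h.Bt h.τ1 h.τn h.hT.le
    (fun k a b c => (h.hE k a b c).le) (fun k a b c => (h.hS k a b c).le)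
    (fun k a b c => (h.hG k a b c).le)
    (fun k a b c => by by_cases hk : k = i
                       · simp [hk] at c
                       · simp only [hk, if_false] at c; exact (h.hs k a b c).le)
    (fun k a b c => by by_cases hk : k = i
                       · subst hk; exact hz.le
                       · simp only [hk, if_false] at c; exact (h.hl k a b c).le)
  refine ⟨_, ⟨h, hb, BV.b i, aN n (i + 1), by simp, edge_leave h1 h2, ?_, ?_, ?_⟩, rfl, rfl, rfl⟩
  · unfold zz; rw [r_leave, val_aN h.At]; simp only [val]; linarith
  · intro u' w' he' hz'
    obtain ⟨k, k1, k2, hk⟩ := edge_cases h he' hz'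
    rw [nb_leave]
    rcases hk with ⟨rfl, rfl, g, g'⟩ | hk
    · have := htr k k1 k2; linarith
    rcases lt_trichotomy k i with hki | rfl | hki
    · obtain ⟨c1, c2, c3, c4, c5⟩ := hlow k k1 hki
      rcases hk with ⟨_, _, g, g'⟩ | ⟨_, _, g, g'⟩ | ⟨_, _, g, g'⟩ | ⟨_, _, g, g'⟩ | ⟨_, _, g, g'⟩ <;>
        linarith
    · rcases hk with ⟨_, _, g, g'⟩ | ⟨_, _, g, g'⟩ | ⟨_, _, g, g'⟩ | ⟨_, _, g, g'⟩ | ⟨h3, h4, g, g'⟩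
      · linarith
      · linarith
      · linarith
      · linarith
      · exact Or.inl ⟨h3, h4⟩
    · right
      rcases hk with ⟨_, _, g, g'⟩ | ⟨_, _, g, g'⟩ | ⟨_, _, g, g'⟩ | ⟨_, _, g, g'⟩ | ⟨_, _, g, g'⟩ <;>
        omega
  · funext v
    cases v with
    | b k => by_cases hk : k = i <;> simp [pol, hk, Function.update_apply]
    | _ => simp [pol]

/-- `RR n c s s'`: `s'` is reached from `s` with at least `c` Bland steps. -/
inductive RR (n : ℕ) : ℕ → St → St → Prop
  | refl (s : St) : RR n 0 s s
  | step {c : ℕ} {s s' s'' : St} : RR n c s s' → Stp n s' s'' → RR n (c + 1) s s''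
  | weak {c c' : ℕ} {s s' : St} : RR n c s s' → c' ≤ c → RR n c' s s'

theorem RR.trans {n c d : ℕ} {s s' s'' : St} (h : RR n c s s') (h' : RR n d s' s'') :
    RR n (c + d) s s'' := by
  induction h' with
  | refl => exact h
  | step _ h2 ih => exact RR.step (ih h) h2
  | weak _ h2 ih => exact RR.weak (ih h) (by omega)

theorem RR.step0 {n c : ℕ} {s s' s'' : St} (h : RR n c s s') (h' : Stp n s' s'') :
    RR n c s s'' := RR.weak (RR.step h h') (by omega)

theorem RR_sim {n : ℕ} {p : BV → ℚ}
    (hp : ∀ v, IsBVertex n v → v ≠ BV.s → 0 < p v ∧ p v ≤ 1)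
    {N : DV → DV → ℕ} (hN : IsDBlandNumbering n N)
    {f : ℕ → (DV → DV)} {m : ℕ}
    (hstep : ∀ k < m, IsBlandStepD n p N (f k) (f (k + 1)))
    (hterm : ∀ u u', ¬ DImproving n p (f m) u u') {c : ℕ} {s s' : St} (h : RR n c s s')
    (hf : f 0 = twin (pol n s)) : ∃ k, c ≤ k ∧ k ≤ m ∧ f k = twin (pol n s') := by
  induction h with
  | refl => exact ⟨0, le_rfl, Nat.zero_le _, hf⟩
  | step _ h2 ih =>
    obtain ⟨k, h3, h4, h5⟩ := ih hf
    obtain ⟨b1, b2, u, w, hus, he, hz, hmin, hpol⟩ := h2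
    have b2' := bell_bellB b2
    rw [hpol] at b2'
    obtain ⟨g1, g2⟩ := simulate hp hN hstep hterm h4 (bell_bellB b1) b2' he hus hz hmin h5
    rw [← hpol] at g2
    exact ⟨k + 3, by omega, g1, g2⟩
  | weak _ h2 ih =>
    obtain ⟨k, h3, h4, h5⟩ := ih hf
    exact ⟨k, by omega, h4, h5⟩

/-! ## The combinatorial run -/

theorem upd {γ : Type} {f g : ℕ → γ} {i : ℕ} {c : γ} (h : f = fun k => if k = i then c else g k) :
    f i = c ∧ ∀ k, k ≠ i → f k = g k := by
  subst h
  exact ⟨by simp, fun k hk => by simp [hk]⟩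

theorem pw (k : ℕ) : (2 : ℚ) ^ (k + 1) = 2 * 2 ^ k := by ring

theorem pwm {i j : ℕ} (h : i ≤ j) : (2 : ℚ) ^ i ≤ 2 ^ j := pow_le_pow_right₀ (by norm_num) h

/-- No vertex above level `j` (or at `b j`) runs into a boarding vertex. -/
def Closed (n j : ℕ) (s : St) : Prop :=
  ∀ k, j ≤ k → k < n → (s.β k = false → s.α (k + 1) ≠ Act.G) ∧
    (j < k → s.α k = Act.S → s.α (k + 1) ≠ Act.G)

theorem frame_aux {n j : ℕ} {s s' : St} (h : Bell n s) (h' : Bell n s') (hj : 1 ≤ j)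
    (hβ : ∀ k, j ≤ k → s'.β k = s.β k) (hα : ∀ k, j < k → s'.α k = s.α k) (hc : Closed n j s) :
    ∀ d k, k + d = n + 1 → j ≤ k →
      s'.B k = s.B k ∧ (j < k → (k ≤ n → s.α k ≠ Act.G) → s'.A k = s.A k) := by
  intro d
  induction d with
  | zero =>
    intro k hk _
    have : k = n + 1 := by omega
    subst this
    exact ⟨by rw [h.Bt, h'.Bt], fun _ _ => by rw [h.At, h'.At]⟩
  | succ d ih =>
    intro k hk hjk
    obtain ⟨ihb, iha⟩ := ih (k + 1) (by omega) (by omega)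
    have hkn : k ≤ n := by omega
    have hk1 : 1 ≤ k := by omega
    have hB : s'.B k = s.B k := by
      cases hb : s.β k with
      | true => rw [h.hs k hk1 hkn hb, h'.hs k hk1 hkn (by rw [hβ k hjk, hb]), ihb]
      | false =>
        rw [h.hl k hk1 hkn hb, h'.hl k hk1 hkn (by rw [hβ k hjk, hb])]
        exact iha (by omega) (fun hkn' => (hc k hjk (by omega)).1 hb)
    refine ⟨hB, fun hlt hG => ?_⟩
    cases ha : s.α k with
    | E => rw [h.hE k hk1 hkn ha, h'.hE k hk1 hkn (by rw [hα k hlt, ha]), hB]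
    | S =>
      rw [h.hS k hk1 hkn ha, h'.hS k hk1 hkn (by rw [hα k hlt, ha])]
      exact iha (by omega) (fun hkn' => (hc k hjk (by omega)).2 hlt ha)
    | G => exact absurd ha (hG hkn)

theorem frame {n j : ℕ} {s s' : St} (h : Bell n s) (h' : Bell n s') (hj : 1 ≤ j)
    (hβ : ∀ k, j ≤ k → s'.β k = s.β k) (hα : ∀ k, j < k → s'.α k = s.α k) (hc : Closed n j s)
    (k : ℕ) (hk : j ≤ k) (hkn : k ≤ n) :
    s'.B k = s.B k ∧ (j < k → s.α k ≠ Act.G → s'.A k = s.A k) := by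
  obtain ⟨h1, h2⟩ := frame_aux h h' hj hβ hα hc (n + 1 - k) k (by omega) hk
  exact ⟨h1, fun a b => h2 a (fun _ => b)⟩

theorem chain_aux {n lo m : ℕ} {s : St} (h : Bell n s) (hm : m ≤ n)
    (hα : ∀ k, lo < k → k ≤ m → s.α k = Act.E) (hβ : ∀ k, lo < k → k < m → s.β k = false) :
    ∀ d k, k + d = m → lo < k → s.A k = s.B m + 2 ^ (m + 1) - 2 ^ k := by
  intro d
  induction d with
  | zero =>
    intro k hk hlo
    have : k = m := by omega
    subst this
    rw [h.hE k (by omega) hm (hα k hlo le_rfl), pw]; ring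
  | succ d ih =>
    intro k hk hlo
    have := ih (k + 1) (by omega) (by omega)
    rw [h.hE k (by omega) (by omega) (hα k hlo (by omega)),
      h.hl k (by omega) (by omega) (hβ k hlo (by omega)), this, pw k]; ring

theorem chain {n lo m : ℕ} {s : St} (h : Bell n s) (hm : m ≤ n)
    (hα : ∀ k, lo < k → k ≤ m → s.α k = Act.E) (hβ : ∀ k, lo < k → k < m → s.β k = false)
    (k : ℕ) (hk : lo < k) (hkm : k ≤ m) : s.A k = s.B m + 2 ^ (m + 1) - 2 ^ k :=
  chain_aux h hm hα hβ (m - k) k (by omega) hk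

def SameUp (j : ℕ) (s s' : St) : Prop := ∀ k, j < k → s'.α k = s.α k ∧ s'.β k = s.β k

theorem SameUp.trans {j : ℕ} {s s' s'' : St} (h : SameUp j s s') (h' : SameUp j s' s'') :
    SameUp j s s'' := fun k hk =>
  ⟨(h' k hk).1.trans (h k hk).1, (h' k hk).2.trans (h k hk).2⟩

theorem SameUp.mono {i j : ℕ} {s s' : St} (h : SameUp i s s') (hij : i ≤ j) : SameUp j s s' :=
  fun k hk => h k (by omega)

/-- The part of the state above level `j` is settled, with value `X` at `a (j+1)`. -/
structure Up (n j : ℕ) (X : ℚ) (s : St) : Prop where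
  bell : Bell n s
  jn : j + 1 ≤ n
  cl : Closed n (j + 1) s
  aE : s.α (j + 1) = Act.E
  hX : s.A (j + 1) = X
  le : ∀ k, j + 1 < k → k ≤ n → s.α k ≠ Act.G → s.A k ≤ X

theorem Up.hB {n j : ℕ} {X : ℚ} {s : St} (h : Up n j X s) : s.B (j + 1) = X - 2 ^ (j + 1) := by
  have := h.bell.hE (j + 1) (by omega) h.jn h.aE
  rw [h.hX] at this; linarith

theorem Up.same {n j : ℕ} {X : ℚ} {s s' : St} (h : Up n j X s) (h' : Bell n s')
    (hs : SameUp j s s') : Up n j X s' := by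
  have hf := frame h.bell h' (j := j + 1) (by omega) (fun k hk => (hs k (by omega)).2)
    (fun k hk => (hs k (by omega)).1) h.cl
  have hE : s'.α (j + 1) = Act.E := by rw [(hs (j + 1) (by omega)).1, h.aE]
  refine ⟨h', h.jn, ?_, hE, ?_, ?_⟩
  · intro k hk hkn
    rw [(hs k (by omega)).1, (hs k (by omega)).2, (hs (k + 1) (by omega)).1]
    exact h.cl k hk hkn
  · have := h.bell.hE (j + 1) (by omega) h.jn h.aE
    rw [h'.hE (j + 1) (by omega) h.jn hE, (hf (j + 1) le_rfl h.jn).1, ← this, h.hX]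
  · intro k hk hkn hG
    rw [(hs k (by omega)).1] at hG
    rw [(hf k (by omega) hkn).2 hk hG]
    exact h.le k hk hkn hG

theorem Up.top {n j : ℕ} {X : ℚ} {s : St} (h : Up n j X s) (hT : X ≤ s.T) (k : ℕ) (hk : j < k)
    (hkn : k ≤ n) : s.A k ≤ s.T := by
  by_cases h1 : k = j + 1
  · subst h1; rw [h.hX]; exact hT
  by_cases hG : s.α k = Act.G
  · rw [h.bell.hG k (by omega) hkn hG]
    have := pow_ge_two (i := k) (by omega); linarith
  · exact (h.le k (by omega) hkn hG).trans hT

/-- The recursive claim. -/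
def RunP (n j : ℕ) : Prop := ∀ (s : St) (X : ℚ), Up n j X s →
  (∀ k, 1 ≤ k → k ≤ j → s.α k = Act.E) → (∀ k, 1 ≤ k → k < j → s.β k = false) → s.β j = true →
  s.τ = j + 1 →
  ∃ s', RR n (2 ^ j - 1) s s' ∧ Bell n s' ∧ SameUp j s s' ∧
    (∀ k, 1 ≤ k → k ≤ j → s'.α k = Act.E) ∧ (∀ k, 1 ≤ k → k ≤ j → s'.β k = false) ∧ s'.τ = 1

theorem Adv {n i : ℕ} (hi : 1 ≤ i) (hin : i + 1 ≤ n) (hrun : RunP n i) {s : St} (h : Bell n s)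
    (hα : ∀ k, 1 ≤ k → k ≤ i → s.α k = Act.E) (hβ : ∀ k, 1 ≤ k → k < i → s.β k = false)
    (hβi : s.β i = true) (hτ : s.τ = 1) (hc : Closed n (i + 1) s)
    (hAB : s.A (i + 1) ≤ s.B (i + 1))
    (hle : ∀ k, i + 1 < k → k ≤ n → s.α k ≠ Act.G → s.A k ≤ s.B (i + 1)) :
    ∃ s', RR n (2 ^ i) s s' ∧ Bell n s' ∧ SameUp (i + 1) s s' ∧ s'.β (i + 1) = s.β (i + 1) ∧
      (∀ k, 1 ≤ k → k ≤ i + 1 → s'.α k = Act.E) ∧ (∀ k, 1 ≤ k → k ≤ i → s'.β k = false) ∧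
      s'.τ = 1 := by
  obtain ⟨Y, hY⟩ : ∃ Y, s.B (i + 1) = Y := ⟨_, rfl⟩
  rw [hY] at hAB hle
  have hBi := h.hs i hi (by omega) hβi
  rw [hY] at hBi
  have hA : ∀ k, 1 ≤ k → k ≤ i → s.A k = Y + 3 / 4 + 2 * 2 ^ i - 2 ^ k := by
    intro k h1 h2
    rw [chain (lo := 0) h (by omega) (fun k a b => hα k a b) (fun k a b => hβ k a b) k h1 h2,
      hBi, pw]; ring
  have hT : s.T = Y + 2 * 2 ^ i - 5 / 4 := by rw [h.hT, hτ, hA 1 le_rfl hi]; norm_num; ring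
  have p2 := pow_ge_two hi
  have htr : TrOK n s := by
    intro k h1 h2
    have q := pow_ge_two h1
    by_cases c1 : k ≤ i
    · rw [hA k h1 c1, hT]; linarith
    by_cases c2 : k = i + 1
    · subst c2; linarith
    by_cases c3 : s.α k = Act.G
    · rw [h.hG k h1 h2 c3]; linarith
    · have := hle k (by omega) h2 c3; linarith
  have hlev : ∀ k, 1 ≤ k → k < i + 1 → LevOK s k := by
    intro k h1 h2
    have q := pow_ge_two h1
    have qE := h.hE k h1 (by omega) (hα k h1 (by omega))
    have qA := hA k h1 (by omega)
    have qp := pw k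
    by_cases c : k = i
    · subst c
      exact ⟨by linarith, by linarith, by linarith, by linarith, by linarith⟩
    · have qA' := hA (k + 1) (by omega) (by omega)
      have qB := h.hl k h1 (by omega) (hβ k h1 (by omega))
      have qE' := h.hE (k + 1) (by omega) (by omega) (hα (k + 1) (by omega) (by omega))
      exact ⟨by linarith, by linarith, by linarith, by linarith, by linarith⟩
  have pi1 := pw i
  obtain ⟨s1, hs1, a1, b1, t1⟩ := step_enter h (i := i + 1) (by omega) hin (by linarith) htr hlev
  obtain ⟨a1e, a1n⟩ := upd a1
  have hb1 : Bell n s1 := hs1.2.1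
  have hf := frame h hb1 (j := i + 1) (by omega) (fun k _ => by rw [b1])
    (fun k hk => a1n k (by omega)) hc
  have hB1 : s1.B (i + 1) = Y := by rw [(hf (i + 1) le_rfl hin).1, hY]
  have hA1 : s1.A (i + 1) = 2 ^ (i + 1) + Y := by rw [hb1.hE (i + 1) (by omega) hin a1e, hB1]
  have hα1 : ∀ k, 1 ≤ k → k ≤ i → s1.α k = Act.E := fun k c d => by
    rw [a1n k (by omega)]; exact hα k c d
  have hβ1 : ∀ k, 1 ≤ k → k < i → s1.β k = false := fun k c d => by rw [b1]; exact hβ k c d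
  have hBi1 := hb1.hs i hi (by omega) (by rw [b1]; exact hβi)
  have hAk1 : ∀ k, 1 ≤ k → k ≤ i → s1.A k = Y + 3 / 4 + 2 * 2 ^ i - 2 ^ k := by
    intro k h1 h2
    rw [chain (lo := 0) hb1 (by omega) (fun k a b => hα1 k a b) (fun k a b => hβ1 k a b) k h1 h2,
      hBi1, hB1, pw]; ring
  have hT1 : s1.T = Y + 2 * 2 ^ i - 5 / 4 := by
    rw [hb1.hT, t1, hτ, hAk1 1 le_rfl hi]; norm_num; ring
  have hup1 : Up n i (2 ^ (i + 1) + Y) s1 := by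
    refine ⟨hb1, hin, ?_, a1e, hA1, ?_⟩
    · intro k c d
      rw [b1, a1n (k + 1) (by omega)]
      refine ⟨(hc k c d).1, fun e => ?_⟩
      rw [a1n k (by omega)]; exact (hc k c d).2 e
    · intro k c d e
      rw [a1n k (by omega)] at e
      rw [(hf k (by omega) d).2 c e]
      have := hle k c d e
      linarith
  obtain ⟨s2, hs2, a2, b2, t2⟩ := step_travel hb1 (i := i + 1) (by omega) hin
    (by rw [hT1, hA1, pi1]; linarith) (fun k c d => by
      rw [hAk1 k c (by omega), hT1]; have := pow_ge_two c; linarith)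
  have hup2 := hup1.same hs2.2.1 (fun k _ => by rw [a2, b2]; exact ⟨rfl, rfl⟩)
  obtain ⟨s3, r3, hb3, su3, a3, b3, t3⟩ := hrun s2 _ hup2 (fun k c d => by rw [a2]; exact hα1 k c d)
    (fun k c d => by rw [b2]; exact hβ1 k c d) (by rw [b2, b1]; exact hβi) t2
  refine ⟨s3, ?_, hb3, ?_, ?_, ?_, b3, t3⟩
  · refine RR.weak (((RR.refl s).step hs1).step hs2 |>.trans r3) ?_
    omega
  · intro k hk
    rw [(su3 k (by omega)).1, (su3 k (by omega)).2, a2, b2, b1, a1n k (by omega)]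
    exact ⟨rfl, rfl⟩
  · rw [(su3 (i + 1) (by omega)).2, b2, b1]
  · intro k c d
    by_cases e : k = i + 1
    · subst e; rw [(su3 (i + 1) (by omega)).1, a2, a1e]
    · exact a3 k c (by omega)

theorem run_one {n : ℕ} : RunP n 1 := by
  intro s X hup hα hβ hβ1 hτ
  have hn := hup.jn
  have h := hup.bell
  have hY := hup.hB
  have hX := hup.hX
  norm_num at hY hX hτ hn
  have a1 := h.hE 1 le_rfl (by omega) (hα 1 le_rfl le_rfl)
  have b1 := h.hs 1 le_rfl (by omega) hβ1
  norm_num at a1 b1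
  have hT : s.T = X := by rw [h.hT, hτ, hX]
  obtain ⟨s1, hs1, c1, d1, t1⟩ := step_skip h (i := 1) le_rfl (by omega) (by norm_num; linarith)
    (fun k e f => by
      by_cases g : k = 1
      · subst g; linarith
      · exact hup.top hT.ge k (by omega) f)
    (fun k e f => by omega) (by norm_num; linarith)
  obtain ⟨c1e, c1n⟩ := upd c1
  have su1 : SameUp 1 s s1 := fun k hk => ⟨c1n k (by omega), by rw [d1]⟩
  have up1 := hup.same hs1.2.1 su1
  have h1 := hs1.2.1
  have hX1 := up1.hX
  have hY1 := up1.hB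
  have hT1 : s1.T = X := by rw [h1.hT, t1, hτ]; exact hX1
  have a1 := h1.hS 1 le_rfl (by omega) c1e
  have b1 := h1.hs 1 le_rfl (by omega) (by rw [d1]; exact hβ1)
  norm_num at a1 b1 hX1 hY1
  obtain ⟨s2, hs2, c2, d2, t2⟩ := step_leave h1 (i := 1) le_rfl (by omega) (by norm_num; linarith)
    (fun k e f => by
      by_cases g : k = 1
      · subst g; linarith
      · exact up1.top hT1.ge k (by omega) f)
    (fun k e f => by omega) (by norm_num; linarith) (by norm_num; linarith) (by norm_num; linarith)
    (by norm_num; linarith)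
  obtain ⟨d2e, d2n⟩ := upd d2
  have su2 : SameUp 1 s1 s2 := fun k hk => ⟨by rw [c2], d2n k (by omega)⟩
  have up2 := up1.same hs2.2.1 su2
  have h2 := hs2.2.1
  have hX2 := up2.hX
  have hT2 : s2.T = X := by rw [h2.hT, t2, t1, hτ]; exact hX2
  have a1 := h2.hS 1 le_rfl (by omega) (by rw [c2]; exact c1e)
  have b1 := h2.hl 1 le_rfl (by omega) d2e
  norm_num at a1 b1 hX2
  obtain ⟨s3, hs3, c3, d3, t3⟩ := step_enter h2 (i := 1) le_rfl (by omega) (by norm_num; linarith)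
    (fun k e f => by
      by_cases g : k = 1
      · subst g; linarith
      · exact up2.top hT2.ge k (by omega) f)
    (fun k e f => by omega)
  obtain ⟨c3e, c3n⟩ := upd c3
  have su3 : SameUp 1 s2 s3 := fun k hk => ⟨c3n k (by omega), by rw [d3]⟩
  have up3 := up2.same hs3.2.1 su3
  have h3 := hs3.2.1
  have hX3 := up3.hX
  have hT3 : s3.T = X := by rw [h3.hT, t3, t2, t1, hτ]; exact hX3
  have a1 := h3.hE 1 le_rfl (by omega) c3e
  have b1 := h3.hl 1 le_rfl (by omega) (by rw [d3]; exact d2e)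
  norm_num at a1 b1 hX3
  obtain ⟨s4, hs4, c4, d4, t4⟩ := step_travel h3 (i := 1) le_rfl (by omega) (by linarith)
    (fun k e f => by omega)
  refine ⟨s4, ?_, hs4.2.1, ?_, ?_, ?_, t4⟩
  · exact RR.weak (((((RR.refl s).step hs1).step hs2).step hs3).step hs4) (by norm_num)
  · exact ((su1.trans su2).trans su3).trans (fun k hk => by rw [c4, d4]; exact ⟨rfl, rfl⟩)
  · intro k e f
    have : k = 1 := by omega
    subst this; rw [c4, c3e]
  · intro k e f
    have : k = 1 := by omega
    subst this; rw [d4, d3, d2e]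

/-- First phase of the run: levels `1..i` board. -/
structure P1 (n j : ℕ) (X : ℚ) (i : ℕ) (s : St) : Prop where
  up : Up n j X s
  aG : ∀ k, 1 ≤ k → k ≤ i → s.α k = Act.G
  aE : ∀ k, i < k → k ≤ j → s.α k = Act.E
  bf : ∀ k, 1 ≤ k → k < j → s.β k = false
  bt : s.β j = true
  tau : s.τ = j + 1

theorem P1.facts {n j : ℕ} {X : ℚ} {i : ℕ} {s : St} (h : P1 n j X i s) (hj : 2 ≤ j)
    (hij : i < j) : s.T = X ∧ (∀ k, i < k → k ≤ j → s.A k = X + 3 / 4 - 2 ^ k) ∧ TrOK n s ∧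
      ∀ k, 1 ≤ k → k ≤ i → LevOK s k := by
  have hb := h.up.bell
  have hn := h.up.jn
  have hT : s.T = X := by rw [hb.hT, h.tau, h.up.hX]
  have hBj := hb.hs j (by omega) (by omega) h.bt
  rw [h.up.hB] at hBj
  have hA : ∀ k, i < k → k ≤ j → s.A k = X + 3 / 4 - 2 ^ k := by
    intro k c d
    rw [chain (lo := i) hb (by omega) h.aE (fun k c d => h.bf k (by omega) d) k c d, hBj]; ring
  have hA' : ∀ k, 1 ≤ k → k ≤ i → s.A k = X + 5 / 4 - 2 ^ k := by
    intro k c d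
    rw [hb.hG k c (by omega) (h.aG k c d), hT]; ring
  have hbd : ∀ k, 1 ≤ k → k ≤ j → X + 3 / 4 - 2 ^ k ≤ s.A k ∧ s.A k ≤ X + 5 / 4 - 2 ^ k := by
    intro k c d
    by_cases e : k ≤ i
    · rw [hA' k c e]; constructor <;> linarith
    · rw [hA k (by omega) d]; constructor <;> linarith
  have hBle : ∀ k, 1 ≤ k → k ≤ j → s.B k ≤ X + 5 / 4 - 2 ^ (k + 1) := by
    intro k c d
    by_cases e : k = j
    · subst e; rw [hBj]; linarith
    · rw [hb.hl k c (by omega) (h.bf k c (by omega))]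
      exact (hbd (k + 1) (by omega) (by omega)).2
  refine ⟨hT, hA, ?_, ?_⟩
  · intro k c d
    by_cases e : k ≤ j
    · have := (hbd k c e).2
      have := pow_ge_two c
      linarith
    · exact h.up.top hT.ge k (by omega) d
  · intro k c d
    have q := pow_ge_two c
    have q1 := hA' k c d
    have q2 := hbd (k + 1) (by omega) (by omega)
    have q3 := hBle (k + 1) (by omega) (by omega)
    have q4 := hb.hl k c (by omega) (h.bf k c (by omega))
    have q5 := pw k
    have q6 := pw (k + 1)
    exact ⟨by linarith, by linarith, by linarith, by linarith, by linarith⟩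

theorem P1.run {n j : ℕ} {X : ℚ} {s : St} (h : P1 n j X 0 s) (hj : 2 ≤ j) :
    ∀ i, i < j → ∃ s', RR n 0 s s' ∧ SameUp j s s' ∧ P1 n j X i s' := by
  intro i
  induction i with
  | zero => exact fun _ => ⟨s, RR.refl s, fun k _ => ⟨rfl, rfl⟩, h⟩
  | succ i ih =>
    intro hi
    obtain ⟨s1, r1, su1, p1⟩ := ih (by omega)
    obtain ⟨hT, hA, htr, hlev⟩ := p1.facts hj (by omega)
    have hn := p1.up.jn
    have q1 := hA (i + 1) (by omega) (by omega)
    have q2 := hA (i + 1 + 1) (by omega) (by omega)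
    have q3 := pw (i + 1)
    have q4 := pow_ge_two (i := i + 1) (by omega)
    have q5 := p1.up.bell.hE (i + 1) (by omega) (by omega) (p1.aE (i + 1) (by omega) (by omega))
    obtain ⟨s2, hs2, c, d, t⟩ := step_board p1.up.bell (i := i + 1) (by omega) (by omega)
      (by rw [hT, q1]; linarith) htr (fun k e f => hlev k e (by omega)) q5.ge (by linarith)
    obtain ⟨ce, cn⟩ := upd c
    have su2 : SameUp j s1 s2 := fun k hk => ⟨cn k (by omega), by rw [d]⟩
    refine ⟨s2, r1.step0 hs2, su1.trans su2, p1.up.same hs2.2.1 su2, ?_, ?_, ?_, ?_, ?_⟩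
    · intro k e f
      by_cases g : k = i + 1
      · subst g; exact ce
      · rw [cn k g]; exact p1.aG k e (by omega)
    · intro k e f
      rw [cn k (by omega)]; exact p1.aE k (by omega) f
    · intro k e f
      rw [d]; exact p1.bf k e f
    · rw [d]; exact p1.bt
    · rw [t]; exact p1.tau

/-- Second phase of the run: the vertices `b k` stay, from above. -/
structure P2 (n j : ℕ) (X : ℚ) (i : ℕ) (s : St) : Prop where
  up : Up n j X s
  aG : ∀ k, 1 ≤ k → k < j → s.α k = Act.G
  aS : s.α j = Act.S
  bf : ∀ k, 1 ≤ k → k < i → s.β k = false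
  bt : ∀ k, i ≤ k → k + 1 < j → s.β k = true
  bf1 : ∀ k, k + 1 = j → s.β k = false
  btj : s.β j = true
  tau : s.τ = j + 1

/-- Lower bound for the values of the staying vertices. -/
theorem stay_ge {n j i : ℕ} {X : ℚ} {s : St} (hb : Bell n s) (hi : 1 ≤ i) (hjn : j ≤ n)
    (hX : s.A j = X) (bt : ∀ k, i ≤ k → k + 1 < j → s.β k = true)
    (bf1 : ∀ k, k + 1 = j → s.β k = false) : ∀ d k, k + d + 1 = j → i ≤ k → X ≤ s.B k := by
  intro d
  induction d with
  | zero =>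
    intro k hk hik
    rw [hb.hl k (by omega) (by omega) (bf1 k (by omega)), show k + 1 = j by omega, hX]
  | succ d ih =>
    intro k hk hik
    have := ih (k + 1) (by omega) (by omega)
    rw [hb.hs k (by omega) (by omega) (bt k hik (by omega))]; linarith

theorem P2.facts {n j : ℕ} {X : ℚ} {i : ℕ} {s : St} (h : P2 n j X i s) (hj : 2 ≤ j)
    (hi : 1 ≤ i) (hij : i < j) : s.T = X ∧ (∀ k, 1 ≤ k → k < j → s.A k = X + 5 / 4 - 2 ^ k) ∧
      (∀ k, i ≤ k → k < j → X ≤ s.B k) ∧ TrOK n s ∧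
      (∀ k, 1 ≤ k → k < i → s.B k = X + 5 / 4 - 2 ^ (k + 1)) ∧
      ∀ k, 1 ≤ k → k + 1 < i → LevOK s k := by
  have hb := h.up.bell
  have hn := h.up.jn
  have hT : s.T = X := by rw [hb.hT, h.tau, h.up.hX]
  have hAj : s.A j = X := by rw [hb.hS j (by omega) (by omega) h.aS, h.up.hX]
  have hA : ∀ k, 1 ≤ k → k < j → s.A k = X + 5 / 4 - 2 ^ k := by
    intro k c d
    rw [hb.hG k c (by omega) (h.aG k c d), hT]; ring
  have hB : ∀ k, 1 ≤ k → k < i → s.B k = X + 5 / 4 - 2 ^ (k + 1) := by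
    intro k c d
    rw [hb.hl k c (by omega) (h.bf k c d), hA (k + 1) (by omega) (by omega)]
  refine ⟨hT, hA, ?_, ?_, hB, ?_⟩
  · intro k c d
    exact stay_ge hb hi (by omega) hAj h.bt h.bf1 (j - 1 - k) k (by omega) c
  · intro k c d
    by_cases e : k < j
    · rw [hA k c e, hT]
      have := pow_ge_two c
      linarith
    by_cases f : k = j
    · subst f; linarith
    · exact h.up.top hT.ge k (by omega) d
  · intro k c d
    have q := pow_ge_two c
    have q1 := hA k c (by omega)
    have q2 := hA (k + 1) (by omega) (by omega)
    have q3 := hB k c (by omega)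
    have q4 := hB (k + 1) (by omega) (by omega)
    have q5 := pw k
    have q6 := pw (k + 1)
    exact ⟨by linarith, by linarith, by linarith, by linarith, by linarith⟩

theorem P2.run {n j : ℕ} {X : ℚ} {s : St} (h : P2 n j X (j - 1) s) (hj : 2 ≤ j) :
    ∀ d i, i + d = j - 1 → 1 ≤ i → ∃ s', RR n 0 s s' ∧ SameUp j s s' ∧ P2 n j X i s' := by
  intro d
  induction d with
  | zero =>
    intro i hi _
    have : i = j - 1 := by omega
    subst this
    exact ⟨s, RR.refl s, fun k _ => ⟨rfl, rfl⟩, h⟩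
  | succ d ih =>
    intro i hi hi1
    obtain ⟨s1, r1, su1, p1⟩ := ih (i + 1) (by omega) (by omega)
    obtain ⟨hT, hA, hge, htr, hB, hlev⟩ := p1.facts hj (by omega) (by omega)
    have hn := p1.up.jn
    have q1 := hA i (by omega) (by omega)
    have q2 := hA (i + 1) (by omega) (by omega)
    have q3 := pw i
    have q4 := pow_ge_two hi1
    have q5 := hB i hi1 (by omega)
    have q6 := hge (i + 1) le_rfl (by omega)
    obtain ⟨s2, hs2, c, d, t⟩ := step_stay p1.up.bell (i := i) (by omega) (by omega)
      (by linarith) htr (fun k e f => hlev k e (by omega)) (by linarith) (by linarith)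
      (by linarith)
    obtain ⟨de, dn⟩ := upd d
    have su2 : SameUp j s1 s2 := fun k hk => ⟨by rw [c], dn k (by omega)⟩
    refine ⟨s2, r1.step0 hs2, su1.trans su2, p1.up.same hs2.2.1 su2, ?_, ?_, ?_, ?_, ?_, ?_, ?_⟩
    · intro k e f
      rw [c]; exact p1.aG k e f
    · rw [c]; exact p1.aS
    · intro k e f
      rw [dn k (by omega)]; exact p1.bf k e (by omega)
    · intro k e f
      by_cases g : k = i
      · subst g; exact de
      · rw [dn k g]; exact p1.bt k (by omega) f
    · intro k e
      rw [dn k (by omega)]; exact p1.bf1 k e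
    · rw [dn j (by omega)]; exact p1.btj
    · rw [t]; exact p1.tau

/-- Third phase of the run: levels `1..i` have been entered. -/
structure Q (n j : ℕ) (X : ℚ) (i : ℕ) (s : St) : Prop where
  up : Up n j X s
  aE : ∀ k, 1 ≤ k → k ≤ i → s.α k = Act.E
  aG : ∀ k, i < k → k < j → s.α k = Act.G
  aS : s.α j = Act.S
  bf : ∀ k, 1 ≤ k → k < i → s.β k = false
  bt : ∀ k, i ≤ k → k + 1 < j → s.β k = true
  bf1 : ∀ k, k + 1 = j → s.β k = false
  btj : s.β j = true
  tau : s.τ = 1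

theorem Q.run {n j : ℕ} {X : ℚ} {s : St} (h : Q n j X 1 s) (hj : 2 ≤ j)
    (hrun : ∀ i, 1 ≤ i → i < j → RunP n i) :
    ∀ i, 1 ≤ i → i < j → ∃ s', RR n (2 ^ i - 2) s s' ∧ SameUp j s s' ∧ Q n j X i s' := by
  intro i hi
  induction i, hi using Nat.le_induction with
  | base => exact fun _ => ⟨s, RR.refl s, fun k _ => ⟨rfl, rfl⟩, h⟩
  | succ i hi ih =>
    intro hij
    obtain ⟨s1, r1, su1, q⟩ := ih (by omega)
    have hb := q.up.bell
    have hn := q.up.jn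
    have hAj : s1.A j = X := by rw [hb.hS j (by omega) (by omega) q.aS, q.up.hX]
    have hBge := stay_ge hb hi (by omega) hAj q.bt q.bf1 (j - 1 - (i + 1)) (i + 1) (by omega)
      (by omega)
    have hBi := hb.hs i hi (by omega) (q.bt i le_rfl (by omega))
    have hA1 := chain (lo := 0) hb (show i ≤ n by omega) (fun k a b => q.aE k a b)
      (fun k a b => q.bf k a b) 1 (by omega) hi
    have hT : s1.T = s1.B (i + 1) + 3 / 4 + 2 ^ (i + 1) - 2 := by
      rw [hb.hT, q.tau, hA1, hBi]; norm_num; ring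
    have hAi := hb.hG (i + 1) (by omega) (by omega) (q.aG (i + 1) (by omega) hij)
    obtain ⟨s2, r2, hb2, su2, bi, aE, bf, t⟩ := Adv hi (by omega) (hrun i hi (by omega)) hb q.aE q.bf
      (q.bt i le_rfl (by omega)) q.tau
      (by
        intro k e f
        have hcl := q.up.cl k
        constructor
        · intro g
          by_cases c1 : k + 1 < j
          · rw [q.bt k (by omega) c1] at g; simp at g
          by_cases c2 : k + 1 = j
          · rw [c2, q.aS]; simp
          by_cases c3 : k = j
          · subst c3; rw [q.up.aE]; simp
          · exact (hcl (by omega) f).1 g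
        · intro _ g
          by_cases c1 : k < j
          · rw [q.aG k (by omega) c1] at g; simp at g
          by_cases c3 : k = j
          · subst c3; rw [q.up.aE]; simp
          by_cases c4 : k = j + 1
          · subst c4; rw [q.up.aE] at g; simp at g
          · exact (hcl (by omega) f).2 (by omega) g)
      (by linarith)
      (by
        intro k e f g
        by_cases c1 : k < j
        · exact absurd (q.aG k (by omega) c1) g
        by_cases c2 : k = j
        · subst c2; linarith
        by_cases c3 : k = j + 1
        · subst c3; rw [q.up.hX]; exact hBge
        · exact (q.up.le k (by omega) f g).trans hBge)
    have su2' : SameUp j s1 s2 := su2.mono (by omega)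
    have hp : 2 ≤ 2 ^ i := by
      calc 2 = 2 ^ 1 := by norm_num
        _ ≤ 2 ^ i := Nat.pow_le_pow_right (by norm_num) hi
    refine ⟨s2, RR.weak (r1.trans r2) (by rw [pow_succ]; omega), su1.trans su2',
      q.up.same hb2 su2', aE, ?_, ?_, ?_, ?_, ?_, ?_, t⟩
    · intro k e f
      rw [(su2 k (by omega)).1]; exact q.aG k (by omega) f
    · rw [(su2 j (by omega)).1]; exact q.aS
    · intro k e f
      exact bf k e (by omega)
    · intro k e f
      by_cases g : k = i + 1
      · subst g; rw [bi]; exact q.bt (i + 1) (by omega) f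
      · rw [(su2 k (by omega)).2]; exact q.bt k (by omega) f
    · intro k e
      by_cases g : k = i + 1
      · subst g; rw [bi]; exact q.bf1 (i + 1) e
      · rw [(su2 k (by omega)).2]; exact q.bf1 k e
    · rw [(su2 j (by omega)).2]; exact q.btj

/-- Final phase of the run, starting with all levels below `j` entered. -/
theorem Q.final {n i : ℕ} {X : ℚ} {s : St} (q : Q n (i + 1) X i s) (hi : 1 ≤ i)
    (hrun : RunP n i) : ∃ s', RR n (2 ^ i) s s' ∧ Bell n s' ∧ SameUp (i + 1) s s' ∧
      (∀ k, 1 ≤ k → k ≤ i + 1 → s'.α k = Act.E) ∧ (∀ k, 1 ≤ k → k ≤ i + 1 → s'.β k = false) ∧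
      s'.τ = 1 := by
  have hn := q.up.jn
  have p2 := pow_ge_two hi
  have pi1 := pw i
  have pi2 := pw (i + 1)
  -- facts that hold as long as `b (i+1)` is not better than expected
  have key : ∀ s : St, Up n (i + 1) X s → (∀ k, 1 ≤ k → k ≤ i → s.α k = Act.E) →
      s.α (i + 1) = Act.S → (∀ k, 1 ≤ k → k ≤ i → s.β k = false) → s.τ = 1 →
      s.A (i + 1) = X ∧ s.B i = X ∧ s.T = X + 2 * 2 ^ i - 2 ∧
      (∀ k, 1 ≤ k → k ≤ i → s.A k = X + 2 * 2 ^ i - 2 ^ k) ∧ TrOK n s ∧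
      (∀ k, 1 ≤ k → k < i → LevOK s k) := by
    intro s up aE aS bf tau
    have hb := up.bell
    have hAj : s.A (i + 1) = X := by rw [hb.hS (i + 1) (by omega) (by omega) aS, up.hX]
    have hBi : s.B i = X := by rw [hb.hl i hi (by omega) (bf i hi le_rfl), hAj]
    have hA : ∀ k, 1 ≤ k → k ≤ i → s.A k = X + 2 * 2 ^ i - 2 ^ k := by
      intro k c d
      rw [chain (lo := 0) hb (show i ≤ n by omega) (fun k a b => aE k a b)
        (fun k a b => bf k a b.le) k c d, hBi, pi1]
    have hT : s.T = X + 2 * 2 ^ i - 2 := by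
      rw [hb.hT, tau, hA 1 le_rfl hi]; norm_num
    refine ⟨hAj, hBi, hT, hA, ?_, ?_⟩
    · intro k c d
      by_cases e : k ≤ i
      · rw [hA k c e, hT]; have := pow_ge_two c; linarith
      by_cases f : k = i + 1
      · subst f; linarith
      · exact up.top (by linarith) k (by omega) d
    · intro k c d
      have q0 := pow_ge_two c
      have q1 := hA k c (by omega)
      have q2 := hA (k + 1) (by omega) (by omega)
      have q3 := hb.hl k c (by omega) (bf k c (by omega))
      have q4 := hb.hE (k + 1) (by omega) (by omega) (aE (k + 1) (by omega) (by omega))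
      have q5 := pw k
      exact ⟨by linarith, by linarith, by linarith, by linarith, by linarith⟩
  have bf0 : ∀ k, 1 ≤ k → k ≤ i → s.β k = false := by
    intro k c d
    by_cases e : k = i
    · subst e; exact q.bf1 k rfl
    · exact q.bf k c (by omega)
  obtain ⟨hAj, hBi, hT, hA, htr, hlev⟩ := key s q.up q.aE q.aS bf0 q.tau
  have hb := q.up.bell
  have hX := q.up.hX
  have hBj := hb.hs (i + 1) (by omega) (by omega) q.btj
  rw [q.up.hB] at hBj
  have hAi := hA i hi le_rfl
  obtain ⟨s1, hs1, c1, d1, t1⟩ := step_leave hb (i := i + 1) (by omega) (by omega)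
    (by rw [hX, hBj]; linarith) htr
    (fun k e f => by
      by_cases g : k = i
      · subst g
        exact ⟨by linarith, by linarith, by linarith, by linarith, by linarith⟩
      · exact hlev k e (by omega))
    (by linarith) (by linarith) (by linarith) (by rw [q.up.hB]; linarith)
  obtain ⟨d1e, d1n⟩ := upd d1
  have su1 : SameUp (i + 1) s s1 := fun k hk => ⟨by rw [c1], d1n k (by omega)⟩
  have up1 := q.up.same hs1.2.1 su1
  have bf1 : ∀ k, 1 ≤ k → k ≤ i → s1.β k = false := fun k e f => by
    rw [d1n k (by omega)]; exact bf0 k e f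
  obtain ⟨hAj, hBi, hT, hA, htr, hlev⟩ := key s1 up1 (fun k e f => by rw [c1]; exact q.aE k e f)
    (by rw [c1]; exact q.aS) bf1 (by rw [t1]; exact q.tau)
  have hb := up1.bell
  have hX := up1.hX
  have hBj := hb.hl (i + 1) (by omega) (by omega) d1e
  have hAi := hA i hi le_rfl
  obtain ⟨s2, hs2, c2, d2, t2⟩ := step_stay hb (i := i) (by omega) (by omega) (by linarith) htr
    hlev (by linarith) (by linarith) (by linarith)
  obtain ⟨d2e, d2n⟩ := upd d2
  have su2 : SameUp (i + 1) s1 s2 := fun k hk => ⟨by rw [c2], d2n k (by omega)⟩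
  have up2 := up1.same hs2.2.1 su2
  have hb2 := up2.bell
  have aS2 : s2.α (i + 1) = Act.S := by rw [c2, c1]; exact q.aS
  have bj2 : s2.β (i + 1) = false := by rw [d2n (i + 1) (by omega), d1e]
  have hAj2 : s2.A (i + 1) = X := by rw [hb2.hS (i + 1) (by omega) (by omega) aS2, up2.hX]
  have hBj2 : s2.B (i + 1) = X := by rw [hb2.hl (i + 1) (by omega) (by omega) bj2, up2.hX]
  obtain ⟨s3, r3, hb3, su3, bi, aE, bf, t⟩ := Adv hi (by omega) hrun hb2
    (fun k e f => by rw [c2, c1]; exact q.aE k e f)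
    (fun k e f => by rw [d2n k (by omega)]; exact bf1 k e f.le) d2e (by rw [t2, t1]; exact q.tau)
    (by
      intro k e f
      have hcl := up2.cl k
      constructor
      · intro g
        by_cases c3 : k = i + 1
        · subst c3; rw [up2.aE]; simp
        · exact (hcl (by omega) f).1 g
      · intro _ g
        by_cases c4 : k = i + 1 + 1
        · subst c4; rw [up2.aE] at g; simp at g
        · exact (hcl (by omega) f).2 (by omega) g)
    (by linarith)
    (by
      intro k e f g
      rw [hBj2]
      by_cases c3 : k = i + 1 + 1
      · subst c3; rw [up2.hX]
      · exact up2.le k (by omega) f g)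
  refine ⟨s3, RR.weak ((((RR.refl s).step hs1).step hs2).trans r3) (by omega), hb3,
    (su1.trans su2).trans su3, aE, ?_, t⟩
  intro k e f
  by_cases g : k = i + 1
  · subst g; rw [bi, bj2]
  · exact bf k e (by omega)

theorem run_big {n j : ℕ} (hj : 2 ≤ j) (hrun : ∀ i, 1 ≤ i → i < j → RunP n i) : RunP n j := by
  intro s X hup hα hβ hβ1 hτ
  have hn := hup.jn
  have p0 : P1 n j X 0 s := ⟨hup, fun k _ _ => by omega, fun k a b => hα k a b, hβ, hβ1, hτ⟩
  obtain ⟨s1, r1, su1, p1⟩ := p0.run hj (j - 1) (by omega)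
  obtain ⟨hT, hA, htr, hlev⟩ := p1.facts hj (by omega)
  have q1 := hA j (by omega) le_rfl
  have q2 := pow_ge_two (i := j) (by omega)
  have q3 := p1.up.hX
  have q5 := p1.up.bell.hE j (by omega) (by omega) (p1.aE j (by omega) (by omega))
  obtain ⟨s2, hs2, c2, d2, t2⟩ := step_skip p1.up.bell (i := j) (by omega) (by omega)
    (by linarith) htr (fun k e f => hlev k e (by omega)) q5.ge
  obtain ⟨c2e, c2n⟩ := upd c2
  have su2 : SameUp j s1 s2 := fun k hk => ⟨c2n k (by omega), by rw [d2]⟩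
  have pp2 : P2 n j X (j - 1) s2 := by
    refine ⟨p1.up.same hs2.2.1 su2, ?_, c2e, ?_, ?_, ?_, ?_, ?_⟩
    · intro k e f
      rw [c2n k (by omega)]; exact p1.aG k e (by omega)
    · intro k e f
      rw [d2]; exact p1.bf k e (by omega)
    · intro k e f
      omega
    · intro k e
      rw [d2]; exact p1.bf k (by omega) (by omega)
    · rw [d2]; exact p1.bt
    · rw [t2]; exact p1.tau
  obtain ⟨s3, r3, su3, p3⟩ := pp2.run hj (j - 1 - 1) 1 (by omega) le_rfl
  obtain ⟨hT, hA, hge, htr, -, -⟩ := p3.facts hj le_rfl (by omega)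
  have q1 := hA 1 le_rfl (by omega)
  have q4 := hge 1 le_rfl (by omega)
  norm_num at q1
  obtain ⟨s4, hs4, c4, d4, t4⟩ := step_enter p3.up.bell (i := 1) le_rfl (by omega)
    (by norm_num; linarith) htr (fun k e f => by omega)
  obtain ⟨c4e, c4n⟩ := upd c4
  have su4 : SameUp j s3 s4 := fun k hk => ⟨c4n k (by omega), by rw [d4]⟩
  have up4 := p3.up.same hs4.2.1 su4
  have hb4 := up4.bell
  have hT4 : s4.T = X := by rw [hb4.hT, t4, p3.tau, up4.hX]
  have hAj4 : s4.A j = X := by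
    rw [hb4.hS j (by omega) (by omega) (by rw [c4n j (by omega)]; exact p3.aS), up4.hX]
  have hB4 : X ≤ s4.B 1 := stay_ge hb4 (i := 1) le_rfl (by omega) hAj4
    (fun k e f => by rw [d4]; exact p3.bt k e f) (fun k e => by rw [d4]; exact p3.bf1 k e)
    (j - 1 - 1) 1 (by omega) le_rfl
  have hA4 := hb4.hE 1 le_rfl (by omega) c4e
  norm_num at hA4
  obtain ⟨s5, hs5, c5, d5, t5⟩ := step_travel hb4 (i := 1) le_rfl (by omega)
    (by linarith) (fun k e f => by omega)
  have su5 : SameUp j s4 s5 := fun k hk => by rw [c5, d5]; exact ⟨rfl, rfl⟩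
  have Q1 : Q n j X 1 s5 := by
    refine ⟨up4.same hs5.2.1 su5, ?_, ?_, ?_, ?_, ?_, ?_, ?_, t5⟩
    · intro k e f
      have : k = 1 := by omega
      subst this; rw [c5, c4e]
    · intro k e f
      rw [c5, c4n k (by omega)]; exact p3.aG k (by omega) f
    · rw [c5, c4n j (by omega)]; exact p3.aS
    · intro k e f
      omega
    · intro k e f
      rw [d5, d4]; exact p3.bt k e f
    · intro k e
      rw [d5, d4]; exact p3.bf1 k e
    · rw [d5, d4]; exact p3.btj
  obtain ⟨i, rfl⟩ : ∃ i, j = i + 1 := ⟨j - 1, by omega⟩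
  obtain ⟨s6, r6, su6, Q6⟩ := Q1.run hj hrun i (by omega) (by omega)
  obtain ⟨s7, r7, hb7, su7, aE, bf, t7⟩ := Q6.final (by omega) (hrun i (by omega) (by omega))
  refine ⟨s7, ?_, hb7, ?_, aE, bf, t7⟩
  · have hp : 2 ≤ 2 ^ i := by
      calc 2 = 2 ^ 1 := by norm_num
        _ ≤ 2 ^ i := Nat.pow_le_pow_right (by norm_num) (by omega)
    refine RR.weak (((((r1.step hs2).trans r3).step hs4).step hs5).trans r6 |>.trans r7) ?_
    rw [pow_succ]; omega
  · exact (((((su1.trans su2).trans su3).trans su4).trans su5).trans su6).trans su7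

theorem run_all (n : ℕ) : ∀ j, 1 ≤ j → RunP n j := by
  intro j
  induction j using Nat.strong_induction_on with
  | _ j ih =>
    intro hj
    by_cases h : j = 1
    · subst h; exact run_one
    · exact run_big (by omega) (fun i a b => ih i b a)

/-- The counter state with the lowest `i` levels set. -/
structure HH (n i : ℕ) (s : St) : Prop where
  bell : Bell n s
  aE : ∀ k, 1 ≤ k → k ≤ i → s.α k = Act.E
  aS : ∀ k, i < k → k ≤ n → s.α k = Act.S
  bf : ∀ k, 1 ≤ k → k ≤ n → s.β k = false
  tau : s.τ = 1

theorem zero_above {n i : ℕ} {s : St} (hb : Bell n s)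
    (aS : ∀ k, i < k → k ≤ n → s.α k = Act.S) (bf : ∀ k, i < k → k ≤ n → s.β k = false) :
    ∀ d k, k + d = n + 1 → i < k → s.A k = 0 ∧ s.B k = 0 := by
  intro d
  induction d with
  | zero =>
    intro k hk _
    have : k = n + 1 := by omega
    subst this
    exact ⟨hb.At, hb.Bt⟩
  | succ d ih =>
    intro k hk hik
    have := ih (k + 1) (by omega) (by omega)
    rw [hb.hS k (by omega) (by omega) (aS k hik (by omega)),
      hb.hl k (by omega) (by omega) (bf k hik (by omega))]
    exact ⟨this.1, this.1⟩

theorem HH.succ {n i : ℕ} {s : St} (h : HH n i s) (hi : 1 ≤ i) (hin : i + 1 ≤ n) :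
    ∃ s', RR n (2 ^ i) s s' ∧ HH n (i + 1) s' := by
  have hb := h.bell
  have hz : ∀ k, i < k → k ≤ n → s.A k = 0 ∧ s.B k = 0 := fun k a b =>
    zero_above hb h.aS (fun k c d => h.bf k (by omega) d) (n + 1 - k) k (by omega) a
  have hBi : s.B i = 0 := by
    rw [hb.hl i hi (by omega) (h.bf i hi (by omega)), (hz (i + 1) (by omega) hin).1]
  have hA : ∀ k, 1 ≤ k → k ≤ i → s.A k = 2 * 2 ^ i - 2 ^ k := by
    intro k c d
    rw [chain (lo := 0) hb (show i ≤ n by omega) (fun k a b => h.aE k a b)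
      (fun k a b => h.bf k a (by omega)) k c d, hBi, pw]; ring
  have hT : s.T = 2 * 2 ^ i - 2 := by rw [hb.hT, h.tau, hA 1 le_rfl hi]; norm_num
  have p2 := pow_ge_two hi
  have hz1 := hz (i + 1) (by omega) hin
  have hAi := hA i hi le_rfl
  obtain ⟨s1, hs1, c1, d1, t1⟩ := step_stay hb (i := i) hi (by omega)
    (by rw [hBi, hz1.2]; norm_num)
    (fun k c d => by
      by_cases e : k ≤ i
      · rw [hA k c e, hT]; have := pow_ge_two c; linarith
      · rw [(hz k (by omega) d).1, hT]; linarith)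
    (fun k c d => by
      have q0 := pow_ge_two c
      have q1 := hA k c (by omega)
      have q2 := hA (k + 1) (by omega) (by omega)
      have q3 := hb.hl k c (by omega) (h.bf k c (by omega))
      have q4 := hb.hE (k + 1) (by omega) (by omega) (h.aE (k + 1) (by omega) (by omega))
      have q5 := pw k
      exact ⟨by linarith, by linarith, by linarith, by linarith, by linarith⟩)
    (by linarith) (by linarith) (by linarith)
  obtain ⟨d1e, d1n⟩ := upd d1
  have hb1 := hs1.2.1
  have hz' : ∀ k, i < k → k ≤ n → s1.A k = 0 ∧ s1.B k = 0 := fun k a b =>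
    zero_above hb1 (fun k c d => by rw [c1]; exact h.aS k c d)
      (fun k c d => by rw [d1n k (by omega)]; exact h.bf k (by omega) d) (n + 1 - k) k (by omega) a
  have hz1 := hz' (i + 1) (by omega) hin
  obtain ⟨s2, r2, hb2, su2, bi, aE, bf, t⟩ := Adv hi hin (run_all n i hi) hb1
    (fun k c d => by rw [c1]; exact h.aE k c d)
    (fun k c d => by rw [d1n k (by omega)]; exact h.bf k c (by omega)) d1e
    (by rw [t1]; exact h.tau)
    (by
      intro k e f
      rw [c1, h.aS (k + 1) (by omega) (by omega)]
      simp)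
    (by rw [hz1.1, hz1.2])
    (fun k e f _ => by rw [(hz' k (by omega) f).1, hz1.2])
  refine ⟨s2, RR.weak (((RR.refl s).step hs1).trans r2) (by omega), hb2, aE, ?_, ?_, t⟩
  · intro k c d
    rw [(su2 k c).1, c1]; exact h.aS k (by omega) d
  · intro k c d
    by_cases e : k ≤ i
    · exact bf k c e
    by_cases f : k = i + 1
    · subst f; rw [bi, d1n (i + 1) (by omega)]; exact h.bf (i + 1) c d
    · rw [(su2 k (by omega)).2, d1n k (by omega)]; exact h.bf k c d

/-- The initial state. -/
def st0 : St := ⟨fun _ => Act.S, fun _ => false, 1, fun _ => 0, fun _ => 0, 0⟩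

theorem st0_bell {n : ℕ} (hn : 1 ≤ n) : Bell n st0 := by
  refine ⟨rfl, rfl, le_rfl, hn, rfl, ?_, ?_, ?_, ?_, ?_⟩ <;> intro i _ _ h <;> simp [st0] at h ⊢

theorem HH_run {n : ℕ} (hn : 1 ≤ n) : ∀ i, 1 ≤ i → i ≤ n →
    ∃ s', RR n (2 ^ i - 1) st0 s' ∧ HH n i s' := by
  intro i hi
  induction i, hi using Nat.le_induction with
  | base =>
    intro _
    obtain ⟨s1, hs1, c1, d1, t1⟩ := step_enter (st0_bell hn) (i := 1) le_rfl hn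
      (by norm_num [st0]) (fun k _ _ => le_rfl) (fun k e f => by omega)
    obtain ⟨c1e, c1n⟩ := upd c1
    refine ⟨s1, (RR.refl st0).step hs1, hs1.2.1, ?_, ?_, ?_, t1⟩
    · intro k e f
      have : k = 1 := by omega
      subst this; exact c1e
    · intro k e f
      rw [c1n k (by omega)]; rfl
    · intro k e f
      rw [d1]; rfl
  | succ i hi ih =>
    intro hin
    obtain ⟨s1, r1, h1⟩ := ih (by omega)
    obtain ⟨s2, r2, h2⟩ := h1.succ hi hin
    have hp : 1 ≤ 2 ^ i := Nat.one_le_two_pow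
    exact ⟨s2, RR.weak (r1.trans r2) (by rw [pow_succ]; omega), h2⟩

/-- For every choice of probabilities `p_v ∈ (0,1]` and every Bland numbering `𝒩_{𝔇_n}`,
Bland's policy iteration on `𝔇_n` started at the twin policy of `π_0` performs at least
`2^n - 1` improving switches before terminating. -/
theorem stmt17 (n : ℕ) (hn : 1 ≤ n) (p : BV → ℚ)
    (hp : ∀ v, IsBVertex n v → v ≠ BV.s → 0 < p v ∧ p v ≤ 1)
    (N : DV → DV → ℕ) (hN : IsDBlandNumbering n N)
    (f : ℕ → (DV → DV)) (m : ℕ)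
    (h0 : f 0 = twin (pi0 n))
    (hstep : ∀ k < m, IsBlandStepD n p N (f k) (f (k + 1)))
    (hterm : ∀ u u', ¬ DImproving n p (f m) u u') :
    2 ^ n - 1 ≤ m := by
  have hpol : pol n st0 = pi0 n := by
    funext v
    cases v <;> simp [pol, pi0, st0]
  obtain ⟨s', hr, _⟩ := HH_run hn n hn le_rfl
  obtain ⟨k, h1, h2, _⟩ := RR_sim hp hN hstep hterm hr (by rw [hpol]; exact h0)
  exact h1.trans h2
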